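/- arXiv:1511.03724 — 3 statements merged into one kernel-verified Lean document; each statement's English description precedes it below -/
import Mathlib

section
/- Let R > 0, M > 1 and δ ∈ (0, 1), and let λ be a function analytic on the open disk {z ∈ ℂ : |z| < 2eR} with λ(0) = 1 and |λ(z)| ≤ M for all |z| < 2eR. Then there exists a sequence of closed disks D_j = {z : |z − c_j| ≤ r_j} (c_j ∈ ℂ, r_j ≥ 0) with Σ_j r_j ≤ e⁶·R·δ^{1/log M} such that {z ∈ ℂ : |z| < R and |λ(z)| < δ} ⊆ ⋃_j D_j (log denotes the natural logarithm). -/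
open Metric Set Finset
open scoped Nat

/-- If, for every `k`, fewer than `k` of the numbers `d i` are at most `k * ε`, then their product
is at least `n! * ε ^ n`. -/
theorem factorial_mul_pow_le_prod {ι : Type*} {ε : ℝ} (hε : 0 ≤ ε) (d : ι → ℝ) (s : Finset ι)
    (h : ∀ k : ℕ, 1 ≤ k → k ≤ #s → #{i ∈ s | d i ≤ k * ε} < k) :
    (#s)! * ε ^ #s ≤ ∏ i ∈ s, d i := by
  classical
  induction hn : #s generalizing s with
  | zero => simp [Finset.card_eq_zero.mp hn]
  | succ n ih =>
    obtain ⟨i, his, hi⟩ : ∃ i ∈ s, ((n + 1 : ℕ) : ℝ) * ε < d i := by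
      by_contra! hcon
      have := h (n + 1) (by omega) hn.ge
      rw [Finset.filter_true_of_mem hcon] at this
      omega
    have hcard : #(s.erase i) = n := by rw [Finset.card_erase_of_mem his]; omega
    have key := ih (s.erase i) (fun k hk hkn => lt_of_le_of_lt
      (Finset.card_le_card (Finset.filter_subset_filter _ (Finset.erase_subset i s)))
      (h k hk (by omega))) hcard
    rw [← Finset.mul_prod_erase s d his, Nat.factorial_succ, pow_succ]
    calc (((n + 1) * n ! : ℕ) : ℝ) * (ε ^ n * ε) = ((n + 1 : ℕ) * ε) * (n ! * ε ^ n) := by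
          push_cast; ring
      _ ≤ d i * ∏ j ∈ s.erase i, d j :=
          mul_le_mul hi.le key (by positivity) (le_trans (by positivity) hi.le)

theorem pow_div_exp_le_factorial (H : ℝ) (hH : 0 ≤ H) (n : ℕ) :
    (H / Real.exp 1) ^ n ≤ n ! * (H / n) ^ n := by
  rcases Nat.eq_zero_or_pos n with rfl | hn
  · simp
  have hn' : (0 : ℝ) < n := by exact_mod_cast hn
  have h := Real.pow_div_factorial_le_exp (x := n) hn'.le n
  rw [div_le_iff₀ (by positivity)] at h
  rw [div_pow, div_pow, ← Real.exp_nat_mul, mul_one, mul_div_assoc', div_le_div_iff₀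
    (by positivity) (by positivity)]
  nlinarith [pow_nonneg hH n]

/-- **Cartan's lemma** for products of distances: away from a sequence of balls of total radius at
most `5 * H`, the product of the distances to `n` given points is at least `(H / e) ^ n`. -/
theorem exists_cover_le_prod_dist {α : Type*} [PseudoMetricSpace α] [Nonempty α] {n : ℕ}
    (a : Fin n → α) {H : ℝ} (hH : 0 ≤ H) :
    ∃ (c : ℕ → α) (r : ℕ → ℝ), (∀ j, 0 ≤ r j) ∧ Summable r ∧ ∑' j, r j ≤ 5 * H ∧
      ∀ z, z ∉ ⋃ j, closedBall (c j) (r j) → (H / Real.exp 1) ^ n ≤ ∏ i, dist (a i) z := by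
  classical
  have hε : 0 ≤ H / n := by positivity
  let S : α × ℕ → Finset (Fin n) := fun p => {i | dist (a i) p.1 ≤ p.2 * (H / n)}
  let t : Set (α × ℕ) := {p | 1 ≤ p.2 ∧ p.2 ≤ n ∧ p.2 ≤ #(S p)}
  have hrad (p) (hp : p ∈ t) : p.2 * (H / n) ≤ H := by
    have hn : 0 < n := by have := hp.1; have := hp.2.1; omega
    calc (p.2 : ℝ) * (H / n) ≤ n * (H / n) := by gcongr; exact hp.2.1
      _ = H := by field_simp
  obtain ⟨u, hut, hdisj, hcov⟩ := Vitali.exists_disjoint_subfamily_covering_enlargement_closedBall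
    t (fun p => p.1) (fun p => p.2 * (H / n)) H hrad 5 (by norm_num)
  have hS : u.PairwiseDisjoint S := fun p hp q hq hpq => Finset.disjoint_left.mpr
    fun i hi hi' => (Set.disjoint_left.mp (hdisj hp hq hpq)) (a := a i)
      (by simpa [S] using hi) (by simpa [S] using hi')
  have hne (p : u) : (S p).Nonempty := Finset.card_pos.mp (by
    have := hut p.2; have h1 := this.1; have h2 := this.2.2; omega)
  choose f hf using hne
  have hfin : Finite u := Finite.of_injective f fun p q hpq => by
    by_contra hne
    exact Finset.disjoint_left.mp (hS p.2 q.2 (fun h => hne (Subtype.ext h))) (hf p) (hpq ▸ hf q)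
  have : Fintype u := Fintype.ofFinite u
  have hsum : ∑ p : u, p.1.2 ≤ n := calc
    ∑ p : u, p.1.2 ≤ ∑ p : u, #(S p) := Finset.sum_le_sum fun p _ => (hut p.2).2.2
    _ = #(Finset.univ.biUnion fun p : u => S p) := (Finset.card_biUnion fun p _ q _ hpq =>
        hS (Subtype.prop p) (Subtype.prop q) fun h => hpq (Subtype.ext h)).symm
    _ ≤ n := by simpa using Finset.card_le_univ (Finset.univ.biUnion fun p : u => S p)
  obtain ⟨g, hg⟩ := exists_injective_nat u
  let ρ : u → ℝ := fun p => 5 * (p.1.2 * (H / n))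
  refine ⟨Function.extend g (fun p => p.1.1) (fun _ => Classical.arbitrary α),
    Function.extend g ρ 0, fun j => ?_, (summable_extend_zero hg).mpr (Summable.of_finite), ?_,
    fun z hz => ?_⟩
  · by_cases hj : ∃ p, g p = j
    · obtain ⟨p, rfl⟩ := hj
      rw [hg.extend_apply]
      positivity
    · rw [Function.extend_apply' _ _ _ hj]
      rfl
  · rw [tsum_extend_zero hg, tsum_fintype]
    have : ∑ p, ρ p = 5 * ((∑ p : u, p.1.2 : ℕ) * (H / n)) := by
      rw [← Finset.mul_sum, ← Finset.sum_mul]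
      push_cast
      rfl
    rw [this]
    gcongr
    calc ((∑ p : u, p.1.2 : ℕ) : ℝ) * (H / n) ≤ n * (H / n) := by gcongr
      _ ≤ H := by
        rcases eq_or_ne (n : ℝ) 0 with hn | hn
        · simpa [hn] using hH
        · exact (mul_div_cancel₀ H hn).le
  · refine (pow_div_exp_le_factorial H hH n).trans ?_
    have := factorial_mul_pow_le_prod hε (fun i => dist (a i) z) Finset.univ fun k hk hkn => by
      by_contra! hcon
      obtain ⟨b, hb, hsub⟩ := hcov (z, k) ⟨hk, by simpa using hkn, hcon⟩
      refine hz (mem_iUnion.mpr ⟨g ⟨b, hb⟩, ?_⟩)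
      rw [hg.extend_apply, hg.extend_apply]
      exact hsub (mem_closedBall_self (by positivity))
    simpa using this

theorem exists_differentiableOn_exp_eq_on_ball {f : ℂ → ℂ} {ρ : ℝ}
    (hf : DifferentiableOn ℂ f (ball 0 ρ)) (hf0 : ∀ z ∈ ball (0 : ℂ) ρ, f z ≠ 0) :
    ∃ h : ℂ → ℂ, DifferentiableOn ℂ h (ball 0 ρ) ∧
      ∀ z ∈ ball (0 : ℂ) ρ, f z = Complex.exp (h z) := by
  obtain ⟨h, h0, hh⟩ := ((hf.deriv isOpen_ball).div hf hf0).isExactOn_ball.with_val_at 0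
    (Complex.log (f 0))
  refine ⟨h, fun z hz => (hh z hz).differentiableAt.differentiableWithinAt, fun z hz => ?_⟩
  have hder : ∀ w ∈ ball (0 : ℂ) ρ, HasDerivAt (fun w => f w * Complex.exp (-h w)) 0 w := by
    intro w hw
    refine (((hf.differentiableAt (isOpen_ball.mem_nhds hw)).hasDerivAt).mul
      (hh w hw).neg.cexp).congr_deriv ?_
    have := hf0 w hw
    simp only [Pi.neg_apply, Pi.div_apply]
    field_simp
    ring
  have hz0 : (0 : ℂ) ∈ ball (0 : ℂ) ρ := mem_ball_self (pos_of_mem_ball hz)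
  have := isOpen_ball.is_const_of_deriv_eq_zero (convex_ball (0 : ℂ) ρ).isPreconnected
    (fun w hw => (hder w hw).differentiableAt.differentiableWithinAt)
    (fun w hw => (hder w hw).deriv) hz hz0
  simp only [h0, Complex.exp_neg, Complex.exp_log (hf0 0 hz0), mul_inv_cancel₀ (hf0 0 hz0)] at this
  rwa [mul_inv_eq_one₀ (Complex.exp_ne_zero _)] at this

/-- A zero-free function on the disk of radius `2 * R`, bounded by `M` and of modulus at least `1`
at the origin, has modulus at least `M⁻²` on the disk of radius `R`. -/
theorem inv_sq_le_norm_of_ne_zero {f : ℂ → ℂ} {R M : ℝ} (hM : 1 < M)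
    (hf : DifferentiableOn ℂ f (ball 0 (2 * R))) (hne : ∀ z ∈ ball (0 : ℂ) (2 * R), f z ≠ 0)
    (hbd : ∀ z ∈ ball (0 : ℂ) (2 * R), ‖f z‖ ≤ M) (h0 : 1 ≤ ‖f 0‖) {z : ℂ} (hz : ‖z‖ < R) :
    (M ^ 2)⁻¹ ≤ ‖f z‖ := by
  have hR : 0 < R := (norm_nonneg z).trans_lt hz
  obtain ⟨h, hd, hexp⟩ := exists_differentiableOn_exp_eq_on_ball hf hne
  have hnorm (w) (hw : w ∈ ball (0 : ℂ) (2 * R)) : ‖f w‖ = Real.exp (h w).re := by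
    rw [hexp w hw, Complex.norm_exp]
  have hu : 0 ≤ (h 0).re := by
    rwa [hnorm 0 (mem_ball_self (by positivity)), Real.one_le_exp_iff] at h0
  have hlog : 0 < Real.log M := Real.log_pos hM
  have hz2 : z ∈ ball (0 : ℂ) (2 * R) := by rw [mem_ball_zero_iff]; linarith
  have hbc := Complex.borelCaratheodory_zero (f := fun w => h w - h 0) hlog (hd.sub_const _)
    (fun w hw => by
      have := hbd w hw
      rw [hnorm w hw, ← Real.le_log_iff_exp_le (by positivity)] at this
      simp only [Set.mem_ofPred_eq, Complex.sub_re]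
      linarith) (by positivity) hz2 (by simp)
  have hfrac : 2 * Real.log M * ‖z‖ / (2 * R - ‖z‖) ≤ 2 * Real.log M := by
    rw [div_le_iff₀ (by linarith)]
    gcongr
    linarith
  have hre := (abs_le.mp (Complex.abs_re_le_norm (h z - h 0))).1
  rw [Complex.sub_re] at hre
  rw [hnorm z hz2, ← Real.exp_log (show (0 : ℝ) < (M ^ 2)⁻¹ by positivity), Real.exp_le_exp,
    Real.log_inv, Real.log_pow]
  push_cast
  linarith

theorem norm_sq_sub_conj_mul_eq {ρ : ℝ} (a : ℂ) {z : ℂ} (hz : ‖z‖ = ρ) :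
    ‖(ρ : ℂ) ^ 2 - (starRingEnd ℂ) a * z‖ = ρ * ‖z - a‖ := by
  have : (ρ : ℂ) ^ 2 - (starRingEnd ℂ) a * z = (starRingEnd ℂ) (z - a) * z := by
    rw [← hz, map_sub, sub_mul, ← Complex.normSq_eq_conj_mul_self, Complex.normSq_eq_norm_sq]
    push_cast
    ring
  rw [this, norm_mul, Complex.norm_conj, hz, mul_comm]

/-- Replacing the factors `z - a i` of `F` by `(ρ ^ 2 - conj (a i) * z) / ρ` preserves the bound
for the modulus on the disk of radius `ρ`. -/
theorem norm_mul_prod_le {G : ℂ → ℂ} {n : ℕ} (a : Fin n → ℂ) {r ρ M : ℝ} (hρ : 0 < ρ) (hρr : ρ < r)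
    (hG : DifferentiableOn ℂ G (ball 0 r))
    (hbd : ∀ z ∈ ball (0 : ℂ) r, ‖(∏ i, (z - a i)) * G z‖ ≤ M) {z : ℂ} (hz : ‖z‖ ≤ ρ) :
    ‖(∏ i, (((ρ : ℂ) ^ 2 - (starRingEnd ℂ) (a i) * z) / ρ)) * G z‖ ≤ M := by
  refine Complex.norm_le_of_forall_mem_frontier_norm_le (U := ball (0 : ℂ) ρ)
    (f := fun z => (∏ i, (((ρ : ℂ) ^ 2 - (starRingEnd ℂ) (a i) * z) / ρ)) * G z)
    isBounded_ball ?_ (fun w hw => ?_) (by rwa [closure_ball _ hρ.ne', mem_closedBall_zero_iff])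
  · refine DifferentiableOn.diffContOnCl_ball (U := ball 0 r) (DifferentiableOn.mul ?_ hG)
      (closedBall_subset_ball hρr)
    fun_prop
  · rw [frontier_ball _ hρ.ne', mem_sphere_zero_iff_norm] at hw
    have := hbd w (by rw [mem_ball_zero_iff]; linarith)
    rw [norm_mul, norm_prod] at this ⊢
    convert this using 3 with i
    rw [norm_div, norm_sq_sub_conj_mul_eq _ hw, Complex.norm_real, Real.norm_of_nonneg hρ.le,
      mul_div_cancel_left₀ _ hρ.ne']

theorem pow_le_norm_mul_prod_zero {G : ℂ → ℂ} {n : ℕ} (a : Fin n → ℂ) {s ρ : ℝ} (hρ : 0 < ρ)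
    (hs : 0 < s)
    (ha : ∀ i, ‖a i‖ ≤ s) (h0 : (∏ i, (0 - a i)) * G 0 = 1) :
    (ρ / s) ^ n ≤ ‖(∏ i, (((ρ : ℂ) ^ 2 - (starRingEnd ℂ) (a i) * 0) / ρ)) * G 0‖ := by
  have h1 : (∏ i, ‖a i‖) * ‖G 0‖ = 1 := by simpa [norm_prod] using congrArg norm h0
  have h2 : ∏ i, ‖a i‖ ≤ s ^ n := by
    simpa using Finset.prod_le_prod (s := Finset.univ) (fun i _ => norm_nonneg (a i))
      (fun i _ => ha i)
  have h3 : (∏ i : Fin n, (((ρ : ℂ) ^ 2 - (starRingEnd ℂ) (a i) * 0) / ρ)) = (ρ : ℂ) ^ n := by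
    have : (ρ : ℂ) ≠ 0 := by exact_mod_cast hρ.ne'
    simp [sq, this]
  rw [h3, norm_mul, norm_pow, Complex.norm_real, Real.norm_of_nonneg hρ.le, div_pow,
    div_le_iff₀ (by positivity)]
  have : 1 ≤ ‖G 0‖ * s ^ n := by
    rw [← h1, mul_comm]; gcongr
  nlinarith [pow_pos hρ n]

/-- Jensen's bound for the number of zeros. -/
theorem card_zeros_le_log {G : ℂ → ℂ} {n : ℕ} (a : Fin n → ℂ) {s M : ℝ} (hs : 0 < s)
    (ha : ∀ i, ‖a i‖ ≤ s) (hG : DifferentiableOn ℂ G (ball 0 (Real.exp 1 * s)))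
    (hbd : ∀ z ∈ ball (0 : ℂ) (Real.exp 1 * s), ‖(∏ i, (z - a i)) * G z‖ ≤ M)
    (h0 : (∏ i, (0 - a i)) * G 0 = 1) : n ≤ Real.log M := by
  have key : ∀ x ∈ Ioo 0 (Real.exp 1), x ^ n ≤ M := fun x hx => by
    have hx' : 0 < x * s := mul_pos hx.1 hs
    have := (pow_le_norm_mul_prod_zero a hx' hs ha h0).trans (norm_mul_prod_le a hx'
      (mul_lt_mul_of_pos_right hx.2 hs) hG hbd (by simpa using hx'.le))
    rwa [mul_div_cancel_right₀ _ hs.ne'] at this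
  have hle : Real.exp 1 ^ n ≤ M := by
    refine ContinuousWithinAt.closure_le (s := Ioo 0 (Real.exp 1)) (f := fun x => x ^ n)
      (g := fun _ => M) ?_ (by fun_prop) (by fun_prop) key
    rw [closure_Ioo (Real.exp_pos 1).ne]
    exact ⟨(Real.exp_pos 1).le, le_rfl⟩
  rw [← Real.exp_nat_mul, mul_one] at hle
  exact (Real.le_log_iff_exp_le ((Real.exp_pos _).trans_le hle)).mpr hle

/-- A bounded function with value `1` at the origin factors as a polynomial with all zeros in
the disk of radius `s` and a factor without zeros there. -/
theorem exists_factorization {F : ℂ → ℂ} {s M : ℝ} (hs : 0 < s)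
    (hF : DifferentiableOn ℂ F (ball 0 (Real.exp 1 * s))) (hF0 : F 0 = 1)
    (hbd : ∀ z ∈ ball (0 : ℂ) (Real.exp 1 * s), ‖F z‖ ≤ M) :
    ∃ (n : ℕ) (a : Fin n → ℂ) (G : ℂ → ℂ), n ≤ Real.log M ∧ (∀ i, ‖a i‖ ≤ s) ∧
      DifferentiableOn ℂ G (ball 0 (Real.exp 1 * s)) ∧ (∀ z, F z = (∏ i, (z - a i)) * G z) ∧
      ∀ z ∈ ball (0 : ℂ) s, G z ≠ 0 := by
  classical
  let P : ℕ → Prop := fun n => ∃ (a : Fin n → ℂ) (G : ℂ → ℂ), (∀ i, ‖a i‖ ≤ s) ∧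
      DifferentiableOn ℂ G (ball 0 (Real.exp 1 * s)) ∧ ∀ z, F z = (∏ i, (z - a i)) * G z
  have hcard (n) (a : Fin n → ℂ) (G : ℂ → ℂ) (ha : ∀ i, ‖a i‖ ≤ s)
      (hG : DifferentiableOn ℂ G (ball 0 (Real.exp 1 * s)))
      (hFG : ∀ z, F z = (∏ i, (z - a i)) * G z) : n ≤ Real.log M :=
    card_zeros_le_log a hs ha hG (fun z hz => hFG z ▸ hbd z hz) (hFG 0 ▸ hF0)
  have hP0 : P 0 := ⟨Fin.elim0, F, fun i => i.elim0, hF, by simp⟩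
  have hPle (n) (hn : P n) : n ≤ ⌊Real.log M⌋₊ := by
    obtain ⟨a, G, ha, hG, hFG⟩ := hn
    exact Nat.le_floor (hcard n a G ha hG hFG)
  obtain ⟨a, G, ha, hG, hFG⟩ : P (Nat.findGreatest P ⌊Real.log M⌋₊) :=
    Nat.findGreatest_spec (Nat.zero_le _) hP0
  refine ⟨_, a, G, hcard _ a G ha hG hFG, ha, hG, hFG, fun z hz hGz => ?_⟩
  have hzs : ‖z‖ < s := mem_ball_zero_iff.mp hz
  have hmem : z ∈ ball (0 : ℂ) (Real.exp 1 * s) := by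
    rw [mem_ball_zero_iff]
    nlinarith [Real.add_one_le_exp 1]
  have hsucc : P (Nat.findGreatest P ⌊Real.log M⌋₊ + 1) := by
    refine ⟨Fin.cons z a, dslope G z, Fin.cases hzs.le ha,
      (Complex.differentiableOn_dslope (isOpen_ball.mem_nhds hmem)).mpr hG, fun w => ?_⟩
    have := sub_smul_dslope G z w
    rw [hGz, sub_zero, smul_eq_mul] at this
    rw [hFG, Fin.prod_univ_succ]
    simp only [Fin.cons_zero, Fin.cons_succ]
    rw [← this]
    ring
  have := Nat.le_findGreatest (hPle _ hsucc) hsucc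
  omega

/-- Outside the exceptional balls of the product of distances to its zeros, a bounded function with
value `1` at the origin is bounded below. -/
theorem exists_cover_le_norm {F : ℂ → ℂ} {R M H : ℝ} (hR : 0 < R) (hM : 1 < M) (hH : 0 < H)
    (hHR : H ≤ 3 * Real.exp 1 * R)
    (hF : DifferentiableOn ℂ F (ball 0 (2 * Real.exp 1 * R))) (hF0 : F 0 = 1)
    (hbd : ∀ z ∈ ball (0 : ℂ) (2 * Real.exp 1 * R), ‖F z‖ ≤ M) :
    ∃ (c : ℕ → ℂ) (r : ℕ → ℝ), (∀ j, 0 ≤ r j) ∧ Summable r ∧ ∑' j, r j ≤ 5 * H ∧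
      ∀ z, ‖z‖ < R → z ∉ ⋃ j, closedBall (c j) (r j) →
        (M ^ 2)⁻¹ * (H / (3 * Real.exp 1 * R)) ^ Real.log M ≤ ‖F z‖ := by
  have hrad : 2 * Real.exp 1 * R = Real.exp 1 * (2 * R) := by ring
  rw [hrad] at hF hbd
  have h2R : 0 < 2 * R := by positivity
  have hlt : 2 * R < Real.exp 1 * (2 * R) := by nlinarith [Real.add_one_le_exp 1]
  obtain ⟨n, a, G, hn, ha, hG, hFG, hGne⟩ := exists_factorization h2R hF hF0 hbd
  obtain ⟨c, r, hr, hsumm, hsum, hcov⟩ := exists_cover_le_prod_dist a hH.le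
  refine ⟨c, r, hr, hsumm, hsum, fun z hz hzc => ?_⟩
  set B : Fin n → ℂ → ℂ := fun i w =>
    (((2 * R : ℝ) : ℂ) ^ 2 - (starRingEnd ℂ) (a i) * w) / (2 * R : ℝ) with hB
  have hBlow (i) (w : ℂ) (hw : ‖w‖ < 2 * R) : B i w ≠ 0 := by
    refine div_ne_zero (sub_ne_zero.mpr fun h => ?_) (by exact_mod_cast h2R.ne')
    have := congrArg norm h
    rw [norm_pow, norm_mul, Complex.norm_conj, Complex.norm_real, Real.norm_of_nonneg h2R.le]
      at this
    nlinarith [ha i, norm_nonneg (a i), norm_nonneg w]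
  have hBup (i) : ‖B i z‖ ≤ 3 * R := by
    rw [hB, norm_div, Complex.norm_real, Real.norm_of_nonneg h2R.le, div_le_iff₀ h2R]
    refine (norm_sub_le _ _).trans ?_
    rw [norm_pow, norm_mul, Complex.norm_conj, Complex.norm_real, Real.norm_of_nonneg h2R.le]
    nlinarith [ha i, norm_nonneg (a i), norm_nonneg z]
  have hψ : (M ^ 2)⁻¹ ≤ ‖(∏ i, B i z) * G z‖ := by
    refine inv_sq_le_norm_of_ne_zero (f := fun w => (∏ i, B i w) * G w) hM ?_ (fun w hw => ?_)
      (fun w hw => ?_) ?_ hz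
    · refine DifferentiableOn.mul ?_ (hG.mono (ball_subset_ball hlt.le))
      fun_prop
    · exact mul_ne_zero (Finset.prod_ne_zero_iff.mpr fun i _ =>
        hBlow i w (mem_ball_zero_iff.mp hw)) (hGne w hw)
    · exact norm_mul_prod_le a h2R hlt hG (fun w hw => hFG w ▸ hbd w hw)
        (mem_ball_zero_iff.mp hw).le
    · have := pow_le_norm_mul_prod_zero a h2R h2R ha ((hFG 0).symm.trans hF0)
      rwa [div_self h2R.ne', one_pow] at this
  have hBprod : ‖∏ i, B i z‖ ≤ (3 * R) ^ n := by
    rw [norm_prod]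
    simpa using Finset.prod_le_prod (s := Finset.univ) (fun i _ => norm_nonneg (B i z))
      (fun i _ => hBup i)
  have hprod : (H / Real.exp 1) ^ n ≤ ‖∏ i, (z - a i)‖ := by
    rw [norm_prod]
    simpa only [dist_eq_norm, norm_sub_rev] using hcov z hzc
  have hGz : (M ^ 2)⁻¹ / (3 * R) ^ n ≤ ‖G z‖ := by
    rw [div_le_iff₀ (by positivity)]
    rw [norm_mul] at hψ
    nlinarith [norm_nonneg (G z)]
  calc (M ^ 2)⁻¹ * (H / (3 * Real.exp 1 * R)) ^ Real.log M
      ≤ (M ^ 2)⁻¹ * (H / (3 * Real.exp 1 * R)) ^ (n : ℝ) := by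
        gcongr (M ^ 2)⁻¹ * ?_
        exact Real.rpow_le_rpow_of_exponent_ge (by positivity)
          ((div_le_one (by positivity)).mpr hHR) hn
    _ = (H / Real.exp 1) ^ n * ((M ^ 2)⁻¹ / (3 * R) ^ n) := by
        rw [Real.rpow_natCast, div_pow, div_pow, mul_pow, mul_pow, mul_pow]
        field_simp
    _ ≤ ‖∏ i, (z - a i)‖ * ‖G z‖ := by gcongr
    _ = ‖F z‖ := by rw [hFG, norm_mul]

/-- Cartan's lemma (covering form): if `λ` is analytic on the open disk of
radius `2eR`, `λ(0) = 1` and `|λ| ≤ M` there, then the sublevel set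
`{|z| < R, |λ(z)| < δ}` can be covered by closed disks of total radius at most
`e⁶·R·δ^{1/log M}`. -/
theorem stmt14 (R M δ : ℝ) (hR : 0 < R) (hM : 1 < M) (hδ0 : 0 < δ) (hδ1 : δ < 1)
    (F : ℂ → ℂ)
    (hF : DifferentiableOn ℂ F (Metric.ball (0 : ℂ) (2 * Real.exp 1 * R)))
    (hF0 : F 0 = 1)
    (hFbd : ∀ z ∈ Metric.ball (0 : ℂ) (2 * Real.exp 1 * R), ‖F z‖ ≤ M) :
    ∃ (c : ℕ → ℂ) (r : ℕ → ℝ), (∀ j, 0 ≤ r j) ∧ Summable r ∧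
      (∑' j, r j) ≤ Real.exp 6 * R * δ ^ (1 / Real.log M) ∧
      {z : ℂ | ‖z‖ < R ∧ ‖F z‖ < δ} ⊆
        ⋃ j, Metric.closedBall (c j) (r j) := by
  have hL : 0 < Real.log M := Real.log_pos hM
  have he6 : Real.exp 6 = Real.exp 1 ^ 3 * Real.exp 1 ^ 3 := by
    rw [← Real.exp_nat_mul, ← Real.exp_add]
    norm_num
  have he2 : Real.exp 2 = Real.exp 1 ^ 2 := by
    rw [← Real.exp_nat_mul]
    norm_num
  have he3 : 15 ≤ Real.exp 1 ^ 3 := by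
    refine le_trans ?_ (pow_le_pow_left₀ (by norm_num) Real.exp_one_gt_d9.le 3)
    norm_num
  set t : ℝ := δ ^ (1 / Real.log M) with ht
  have ht0 : 0 < t := Real.rpow_pos_of_pos hδ0 _
  have htL : t ^ Real.log M = δ := by
    rw [ht, ← Real.rpow_mul hδ0.le, one_div_mul_cancel hL.ne', Real.rpow_one]
  rcases le_total 1 (Real.exp 2 * t) with hcase | hcase
  · refine ⟨0, Pi.single 0 R, fun j => ?_, (hasSum_pi_single 0 R).summable, ?_, fun z hz => ?_⟩
    · by_cases hj : j = 0
      · subst hj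
        simpa using hR.le
      · simp [hj]
    · rw [tsum_pi_single]
      have : Real.exp 2 ≤ Real.exp 6 := Real.exp_le_exp.mpr (by norm_num)
      nlinarith [mul_le_mul_of_nonneg_right this ht0.le]
    · exact Set.mem_iUnion.mpr ⟨0, by simpa using hz.1.le⟩
  · obtain ⟨c, r, hr, hsumm, hsum, hcov⟩ := exists_cover_le_norm (H := 3 * Real.exp 1 * R *
      (Real.exp 2 * t)) hR hM (by positivity) (mul_le_of_le_one_right (by positivity) hcase)
      hF hF0 hFbd
    refine ⟨c, r, hr, hsumm, hsum.trans ?_, fun z hz => ?_⟩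
    · rw [he6, he2]
      calc 5 * (3 * Real.exp 1 * R * (Real.exp 1 ^ 2 * t))
          = 15 * (Real.exp 1 ^ 3 * R * t) := by ring
        _ ≤ Real.exp 1 ^ 3 * (Real.exp 1 ^ 3 * R * t) := by gcongr
        _ = _ := by ring
    · by_contra hzc
      have h := hcov z hz.1 hzc
      have hM2 : Real.exp 2 ^ Real.log M = M ^ 2 := by
        rw [← Real.exp_mul, mul_comm, Real.exp_mul, Real.exp_log (by positivity)]
        norm_num
      rw [mul_div_cancel_left₀ _ (by positivity), Real.mul_rpow (by positivity) ht0.le, htL, hM2,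
        inv_mul_cancel_left₀ (by positivity)] at h
      exact absurd hz.2 (not_lt.mpr h)
end

section
/- Fix real κ > 0 and η > 0. For every c > 1 and every a ∈ (0, 1/2) there exists f₀ > 0 such that for all f ∈ (0, f₀), all r > f^a and all z ∈ ℂ with |z| < r: |D_f(z)| ≤ (1/(2rη²))·exp(4c·r^{3/2}/(3f)). -/
open Real

/-- Taylor coefficients of the Airy function `Ai`:
`a₀ = 3^{−2/3}/Γ(2/3)`, `a₁ = −3^{−1/3}/Γ(1/3)`, `a₂ = 0`,
`a_{k+3} = a_k/((k+3)(k+2))`. -/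
noncomputable def airyCoeff : ℕ → ℂ
  | 0 => (3 : ℂ) ^ (-(2 : ℂ) / 3) / Complex.Gamma (2 / 3)
  | 1 => -((3 : ℂ) ^ (-(1 : ℂ) / 3) / Complex.Gamma (1 / 3))
  | 2 => 0
  | (k + 3) => airyCoeff k / (((k : ℂ) + 3) * ((k : ℂ) + 2))

/-- The Airy function `Ai`, as the entire function with the above Taylor
coefficients at `0`. -/
noncomputable def Ai (z : ℂ) : ℂ := ∑' k : ℕ, airyCoeff k * z ^ k

/-- `ω = e^{2πi/3}` -/
noncomputable def ωc : ℂ := Complex.exp (2 * π * Complex.I / 3)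

/-- `W = f^{1/3}·e^{−iπ/6}/(2π)` -/
noncomputable def Wf (f : ℝ) : ℂ :=
  ((f ^ ((1 : ℝ) / 3) : ℝ) : ℂ) * Complex.exp (-(π : ℂ) * Complex.I / 6) / (2 * π)

/-- `α₊(z) = Ai(−ω(z − κf)f^{−2/3})·Ai(−(z − κf)f^{−2/3})` -/
noncomputable def alphaP (κ f : ℝ) (z : ℂ) : ℂ :=
  Ai (-ωc * (z - κ * f) * ((f ^ (-(2 : ℝ) / 3) : ℝ) : ℂ)) *
    Ai (-(z - κ * f) * ((f ^ (-(2 : ℝ) / 3) : ℝ) : ℂ))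

/-- `α₋(z) = Ai(−ω(z + κf)f^{−2/3})·Ai(−(z + κf)f^{−2/3})` -/
noncomputable def alphaM (κ f : ℝ) (z : ℂ) : ℂ :=
  Ai (-ωc * (z + κ * f) * ((f ^ (-(2 : ℝ) / 3) : ℝ) : ℂ)) *
    Ai (-(z + κ * f) * ((f ^ (-(2 : ℝ) / 3) : ℝ) : ℂ))

/-- `β₊(z) = Ai(−ω(z + κf)f^{−2/3})·Ai(−(z − κf)f^{−2/3})` -/
noncomputable def betaP (κ f : ℝ) (z : ℂ) : ℂ :=
  Ai (-ωc * (z + κ * f) * ((f ^ (-(2 : ℝ) / 3) : ℝ) : ℂ)) *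
    Ai (-(z - κ * f) * ((f ^ (-(2 : ℝ) / 3) : ℝ) : ℂ))

/-- `β₋(z) = Ai(−ω(z − κf)f^{−2/3})·Ai(−(z + κf)f^{−2/3})` -/
noncomputable def betaM (κ f : ℝ) (z : ℂ) : ℂ :=
  Ai (-ωc * (z - κ * f) * ((f ^ (-(2 : ℝ) / 3) : ℝ) : ℂ)) *
    Ai (-(z + κ * f) * ((f ^ (-(2 : ℝ) / 3) : ℝ) : ℂ))

/-- The resonance determinant `D_f` of the Stark Hamiltonian
`p² + fx + η⁻¹(δ_κ + δ_{−κ})`: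
`D_f(z) = 1 + (α₊ + α₋)/(ηW) + β₊(β₋ − β₊)/(η²W²)`. -/
noncomputable def Df (κ η f : ℝ) (z : ℂ) : ℂ :=
  1 + (alphaP κ f z + alphaM κ f z) / (η * Wf f)
    + betaP κ f z * (betaM κ f z - betaP κ f z) / (η ^ 2 * (Wf f) ^ 2)

theorem airyCoeff_add_three (k : ℕ) :
    airyCoeff (k + 3) = airyCoeff k / (((k : ℂ) + 3) * ((k : ℂ) + 2)) := by
  rw [airyCoeff]

theorem norm_airyCoeff_add_three (k : ℕ) :
    ‖airyCoeff (k + 3)‖ = ‖airyCoeff k‖ / (((k : ℝ) + 3) * ((k : ℝ) + 2)) := by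
  rw [airyCoeff_add_three, norm_div, norm_mul]
  congr 2
  · rw [show (k : ℂ) + 3 = ((k + 3 : ℕ) : ℂ) by push_cast; ring, Complex.norm_natCast]
    push_cast; ring
  · rw [show (k : ℂ) + 2 = ((k + 2 : ℕ) : ℂ) by push_cast; ring, Complex.norm_natCast]
    push_cast; ring

theorem airyCoeff_three_mul_add_two (n : ℕ) : airyCoeff (3 * n + 2) = 0 := by
  induction n with
  | zero => simp [airyCoeff]
  | succ n ih =>
    rw [show 3 * (n + 1) + 2 = 3 * n + 2 + 3 by ring, airyCoeff_add_three, ih, zero_div]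

/-- Along the step `k ↦ k + 3` the Airy terms decrease at least as fast as the terms
`y ^ (2 * n) / (2 * n)!` of `cosh y`, where `9 * y ^ 2 = 4 * x ^ 3`. -/
theorem norm_airyCoeff_mul_pow_step {x y B : ℝ} (hx : 0 ≤ x) (hxy : 9 * y ^ 2 = 4 * x ^ 3)
    (n k : ℕ) (hk : 3 * n ≤ k)
    (h : ‖airyCoeff k‖ * x ^ k ≤ B * (y ^ (2 * n) / (2 * n).factorial)) :
    ‖airyCoeff (k + 3)‖ * x ^ (k + 3)
      ≤ B * (y ^ (2 * (n + 1)) / (2 * (n + 1)).factorial) := by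
  have hk' : (3 * n : ℝ) ≤ k := by exact_mod_cast hk
  have hn : (0 : ℝ) ≤ n := n.cast_nonneg
  have hf : (0 : ℝ) < (2 * n).factorial := by exact_mod_cast (2 * n).factorial_pos
  have hden : (9 / 4) * ((2 * n + 2) * (2 * n + 1) : ℝ) ≤ ((k : ℝ) + 3) * ((k : ℝ) + 2) := by
    nlinarith
  have hrhs : B * (y ^ (2 * (n + 1)) / (2 * (n + 1)).factorial)
      = B * (y ^ (2 * n) / (2 * n).factorial) *
        (x ^ 3 / ((9 / 4) * ((2 * n + 2) * (2 * n + 1)))) := by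
    rw [show 2 * (n + 1) = 2 * n + 1 + 1 by ring, Nat.factorial_succ, Nat.factorial_succ,
      show y ^ (2 * n + 1 + 1) = y ^ (2 * n) * y ^ 2 by ring,
      show y ^ 2 = 4 / 9 * x ^ 3 by linarith]
    push_cast
    field_simp
    ring
  rw [norm_airyCoeff_add_three, hrhs,
    show ‖airyCoeff k‖ / (((k : ℝ) + 3) * ((k : ℝ) + 2)) * x ^ (k + 3)
      = ‖airyCoeff k‖ * x ^ k * (x ^ 3 / (((k : ℝ) + 3) * ((k : ℝ) + 2))) by ring]
  refine mul_le_mul h ?_ (by positivity) (le_trans (by positivity) h)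
  gcongr

theorem sum_norm_airyCoeff_mul_pow_le {x y : ℝ} (hx : 0 ≤ x) (hxy : 9 * y ^ 2 = 4 * x ^ 3)
    (N : ℕ) :
    ∑ k ∈ Finset.range N, ‖airyCoeff k‖ * x ^ k
      ≤ (‖airyCoeff 0‖ + ‖airyCoeff 1‖ * x) * Real.cosh y := by
  have h0 : ∀ n, ‖airyCoeff (3 * n)‖ * x ^ (3 * n)
      ≤ ‖airyCoeff 0‖ * (y ^ (2 * n) / (2 * n).factorial) := by
    intro n
    induction n with
    | zero => simp
    | succ n ih => exact norm_airyCoeff_mul_pow_step hx hxy n (3 * n) le_rfl ih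
  have h1 : ∀ n, ‖airyCoeff (3 * n + 1)‖ * x ^ (3 * n + 1)
      ≤ (‖airyCoeff 1‖ * x) * (y ^ (2 * n) / (2 * n).factorial) := by
    intro n
    induction n with
    | zero => simp
    | succ n ih => exact norm_airyCoeff_mul_pow_step hx hxy n (3 * n + 1) (by omega) ih
  have hblocks : ∀ M : ℕ, ∑ k ∈ Finset.range (3 * M), ‖airyCoeff k‖ * x ^ k
      ≤ (‖airyCoeff 0‖ + ‖airyCoeff 1‖ * x) *
        ∑ n ∈ Finset.range M, y ^ (2 * n) / (2 * n).factorial := by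
    intro M
    induction M with
    | zero => simp
    | succ M ih =>
      rw [show 3 * (M + 1) = 3 * M + 1 + 1 + 1 by ring, Finset.sum_range_succ,
        Finset.sum_range_succ, Finset.sum_range_succ, Finset.sum_range_succ _ M,
        airyCoeff_three_mul_add_two]
      simp only [norm_zero, zero_mul]
      linarith [h0 M, h1 M]
  have hcosh : ∑ n ∈ Finset.range N, y ^ (2 * n) / (2 * n).factorial ≤ Real.cosh y :=
    sum_le_hasSum _ (fun n _ => div_nonneg ((even_two_mul n).pow_nonneg y) (by positivity))
      (Real.hasSum_cosh y)
  calc ∑ k ∈ Finset.range N, ‖airyCoeff k‖ * x ^ k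
      ≤ ∑ k ∈ Finset.range (3 * N), ‖airyCoeff k‖ * x ^ k :=
        Finset.sum_le_sum_of_subset_of_nonneg
          (Finset.range_mono (by omega)) (fun _ _ _ => by positivity)
    _ ≤ _ := (hblocks N).trans (by gcongr)

theorem summable_norm_airyCoeff_mul_pow {x : ℝ} (hx : 0 ≤ x) :
    Summable fun k => ‖airyCoeff k‖ * x ^ k := by
  refine summable_of_sum_range_le (fun k => by positivity)
    (sum_norm_airyCoeff_mul_pow_le (y := 2 / 3 * Real.sqrt (x ^ 3)) hx ?_)
  rw [mul_pow, Real.sq_sqrt (by positivity)]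
  ring

theorem norm_Ai_le {w : ℂ} {s : ℝ} (hs : 0 ≤ s) (hw : ‖w‖ ≤ s ^ 2) :
    ‖Ai w‖ ≤ (‖airyCoeff 0‖ + ‖airyCoeff 1‖ * s ^ 2) * Real.exp (2 / 3 * s ^ 3) := by
  have hle : ∀ k, ‖airyCoeff k * w ^ k‖ ≤ ‖airyCoeff k‖ * (s ^ 2) ^ k := fun k => by
    rw [norm_mul, norm_pow]
    gcongr
  have hsum := summable_norm_airyCoeff_mul_pow (sq_nonneg s)
  have hcosh : Real.cosh (2 / 3 * s ^ 3) ≤ Real.exp (2 / 3 * s ^ 3) := by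
    rw [Real.cosh_eq]
    have : Real.exp (-(2 / 3 * s ^ 3)) ≤ Real.exp (2 / 3 * s ^ 3) := by
      have : 0 ≤ 2 / 3 * s ^ 3 := by positivity
      gcongr
      linarith
    linarith
  calc ‖Ai w‖ ≤ ∑' k, ‖airyCoeff k‖ * (s ^ 2) ^ k :=
        tsum_of_norm_bounded hsum.hasSum hle
    _ ≤ (‖airyCoeff 0‖ + ‖airyCoeff 1‖ * s ^ 2) * Real.cosh (2 / 3 * s ^ 3) :=
        Real.tsum_le_of_sum_range_le (fun k => by positivity)
          (sum_norm_airyCoeff_mul_pow_le (sq_nonneg s) (by ring))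
    _ ≤ _ := by gcongr

/-- Coefficients of the formal derivative of a power series with infinite radius of convergence
again have infinite radius of convergence. -/
theorem summable_norm_succ_mul_pow {b : ℕ → ℂ}
    (hb : ∀ x : ℝ, 0 ≤ x → Summable fun k => ‖b k‖ * x ^ k) {x : ℝ} (hx : 0 ≤ x) :
    Summable fun k : ℕ => ‖((k : ℂ) + 1) * b (k + 1)‖ * x ^ k := by
  have h := (summable_nat_add_iff 1).2 (hb (2 * (x + 1)) (by positivity))
  refine Summable.of_nonneg_of_le (fun k => by positivity) (fun k => ?_) h
  have hk : ‖(k : ℂ) + 1‖ ≤ 2 ^ (k + 1) := by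
    rw [show (k : ℂ) + 1 = ((k + 1 : ℕ) : ℂ) by push_cast; ring, Complex.norm_natCast]
    exact_mod_cast (Nat.lt_two_pow_self (n := k + 1)).le
  have hxk : x ^ k ≤ (x + 1) ^ (k + 1) :=
    (pow_le_pow_left₀ hx (by linarith) k).trans
      (pow_le_pow_right₀ (by linarith) (Nat.le_succ k))
  calc ‖((k : ℂ) + 1) * b (k + 1)‖ * x ^ k
      = ‖(k : ℂ) + 1‖ * ‖b (k + 1)‖ * x ^ k := by rw [norm_mul]
    _ ≤ 2 ^ (k + 1) * ‖b (k + 1)‖ * (x + 1) ^ (k + 1) := by gcongr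
    _ = _ := by rw [mul_pow]; ring

theorem hasDerivAt_tsum_mul_pow {b : ℕ → ℂ}
    (hb : ∀ x : ℝ, 0 ≤ x → Summable fun k => ‖b k‖ * x ^ k) (z : ℂ) :
    HasDerivAt (fun w => ∑' k, b k * w ^ k) (∑' k : ℕ, ((k : ℂ) + 1) * b (k + 1) * z ^ k) z := by
  set R := ‖z‖ + 1
  have hR : 0 ≤ R := by positivity
  have hu : Summable fun k : ℕ => ‖(k : ℂ) * b k‖ * R ^ (k - 1) := by
    rw [← summable_nat_add_iff 1]
    simpa using summable_norm_succ_mul_pow hb hR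
  have hderiv : ∀ (k : ℕ) (w : ℂ), w ∈ Metric.ball (0 : ℂ) R →
      HasDerivAt (fun w => b k * w ^ k) ((k : ℂ) * b k * w ^ (k - 1)) w := fun k w _ => by
    exact ((hasDerivAt_pow k w).const_mul (b k)).congr_deriv (by ring)
  have hbound : ∀ (k : ℕ) (w : ℂ), w ∈ Metric.ball (0 : ℂ) R →
      ‖(k : ℂ) * b k * w ^ (k - 1)‖ ≤ ‖(k : ℂ) * b k‖ * R ^ (k - 1) := fun k w hw => by
    rw [norm_mul, norm_pow]
    have : ‖w‖ ≤ R := (mem_ball_zero_iff.1 hw).le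
    gcongr
  have hz : z ∈ Metric.ball (0 : ℂ) R := by simp [R]
  have hzsum : Summable fun k => b k * z ^ k :=
    Summable.of_norm (by simpa [norm_mul, norm_pow] using hb ‖z‖ (norm_nonneg z))
  have hmain := hasDerivAt_tsum_of_isPreconnected hu Metric.isOpen_ball
    (convex_ball (0 : ℂ) R).isPreconnected hderiv hbound hz hzsum hz
  have hsum' : Summable fun k : ℕ => (k : ℂ) * b k * z ^ (k - 1) :=
    Summable.of_norm_bounded hu (fun k => hbound k z hz)
  rw [hsum'.tsum_eq_zero_add] at hmain
  simpa using hmain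

/-- The derivative of the Airy function. -/
noncomputable def AiDeriv (z : ℂ) : ℂ := ∑' k : ℕ, ((k : ℂ) + 1) * airyCoeff (k + 1) * z ^ k

theorem hasDerivAt_Ai (z : ℂ) : HasDerivAt Ai (AiDeriv z) z :=
  hasDerivAt_tsum_mul_pow (fun _ hx => summable_norm_airyCoeff_mul_pow hx) z

theorem hasDerivAt_AiDeriv (z : ℂ) : HasDerivAt AiDeriv (z * Ai z) z := by
  have hsum := fun (x : ℝ) (hx : 0 ≤ x) => summable_norm_succ_mul_pow
    (fun _ hx => summable_norm_airyCoeff_mul_pow hx) hx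
  have h := hasDerivAt_tsum_mul_pow hsum z
  have hsum2 : Summable fun k : ℕ =>
      ((k : ℂ) + 1) * (((k + 1 : ℕ) : ℂ) + 1) * airyCoeff (k + 1 + 1) * z ^ k :=
    Summable.of_norm (by
      simpa [norm_mul, norm_pow, mul_assoc] using
        summable_norm_succ_mul_pow hsum (norm_nonneg z))
  have hval : ∑' k : ℕ, ((k : ℂ) + 1) * ((((k + 1 : ℕ) : ℂ) + 1) * airyCoeff (k + 1 + 1)) * z ^ k
      = z * Ai z := by
    simp only [← mul_assoc]
    rw [hsum2.tsum_eq_zero_add, Ai, ← tsum_mul_left]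
    simp only [show airyCoeff (0 + 1 + 1) = 0 by simp [airyCoeff], mul_zero, zero_mul, zero_add]
    refine tsum_congr fun k => ?_
    rw [show k + 1 + 1 + 1 = k + 3 by ring, airyCoeff_add_three]
    have h3 : (k : ℂ) + 3 ≠ 0 := by exact_mod_cast (by omega : k + 3 ≠ 0)
    have h2 : (k : ℂ) + 2 ≠ 0 := by exact_mod_cast (by omega : k + 2 ≠ 0)
    push_cast
    field_simp
    ring
  rw [hval] at h
  exact h

theorem norm_le_of_second_order_linear {g g' q : ℝ → ℂ} {s δ : ℝ} (hδ : 0 ≤ δ) (hs : 0 ≤ s)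
    (hg : ∀ t, HasDerivAt g (g' t) t) (hg' : ∀ t, HasDerivAt g' (q t * g t) t)
    (hq : ∀ t ∈ Set.Ico 0 δ, ‖q t‖ ≤ s ^ 2) (h0 : g 0 = 0) :
    s * ‖g δ‖ ≤ ‖g' 0‖ * Real.exp (s * δ) := by
  have hF : ∀ t, HasDerivAt (fun t => (g' t, (s : ℂ) * g t)) (q t * g t, (s : ℂ) * g' t) t :=
    fun t => (hg' t).prodMk ((hg t).const_mul _)
  have hnorm : ‖(s : ℂ)‖ = s := by rw [Complex.norm_real, Real.norm_of_nonneg hs]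
  have h := norm_le_gronwallBound_of_norm_deriv_right_le (f := fun t => (g' t, (s : ℂ) * g t))
    (f' := fun t => (q t * g t, (s : ℂ) * g' t)) (δ := ‖g' 0‖) (K := s) (ε := 0) (a := 0) (b := δ)
    (fun t _ => (hF t).continuousAt.continuousWithinAt)
    (fun t _ => (hF t).hasDerivWithinAt) (by simp [h0, Prod.norm_def])
    (fun t ht => by
      have hqt := hq t ht
      simp only [Prod.norm_def, norm_mul, hnorm, add_zero]
      refine max_le ?_ (mul_le_mul_of_nonneg_left (le_max_left _ _) hs)
      calc ‖q t‖ * ‖g t‖ ≤ s ^ 2 * ‖g t‖ := by gcongr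
        _ = s * (s * ‖g t‖) := by ring
        _ ≤ _ := mul_le_mul_of_nonneg_left (le_max_right _ _) hs)
    δ ⟨hδ, le_rfl⟩
  rw [gronwallBound_ε0, sub_zero] at h
  refine le_trans ?_ h
  simp only [Prod.norm_def, norm_mul, hnorm]
  exact le_max_right _ _

theorem ωc_pow_three : ωc ^ 3 = 1 := by
  rw [ωc, ← Complex.exp_nat_mul, ← Complex.exp_two_pi_mul_I]
  congr 1
  push_cast
  ring

theorem norm_ωc : ‖ωc‖ = 1 := by
  refine (pow_eq_one_iff_of_nonneg (norm_nonneg _) (three_ne_zero)).1 ?_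
  rw [← norm_pow, ωc_pow_three, norm_one]

theorem hasDerivAt_Ai_neg_mul (ζ u : ℂ) :
    HasDerivAt (fun u => Ai (-ζ * u)) (-ζ * AiDeriv (-ζ * u)) u := by
  have h := (hasDerivAt_Ai (-ζ * u)).comp u ((hasDerivAt_id u).const_mul (-ζ))
  exact h.congr_deriv (by ring)

/-- For any cube root of unity `ζ`, `u ↦ Ai (-ζ * u)` satisfies the reflected Airy equation. -/
theorem hasDerivAt_AiDeriv_neg_mul {ζ : ℂ} (hζ : ζ ^ 3 = 1) (u : ℂ) :
    HasDerivAt (fun u => -ζ * AiDeriv (-ζ * u)) (-u * Ai (-ζ * u)) u := by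
  have h := ((hasDerivAt_AiDeriv (-ζ * u)).comp u
    ((hasDerivAt_id u).const_mul (-ζ))).const_mul (-ζ)
  exact h.congr_deriv (by linear_combination (-u * Ai (-ζ * u)) * hζ)

theorem wronskian_const {y₁ y₁' y₂ y₂' p : ℂ → ℂ}
    (h₁ : ∀ u, HasDerivAt y₁ (y₁' u) u) (h₁' : ∀ u, HasDerivAt y₁' (p u * y₁ u) u)
    (h₂ : ∀ u, HasDerivAt y₂ (y₂' u) u) (h₂' : ∀ u, HasDerivAt y₂' (p u * y₂ u) u) (u : ℂ) :
    y₁ u * y₂' u - y₂ u * y₁' u = y₁ 0 * y₂' 0 - y₂ 0 * y₁' 0 := by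
  have h : ∀ u, HasDerivAt (fun u => y₁ u * y₂' u - y₂ u * y₁' u) 0 u := fun u => by
    exact (((h₁ u).mul (h₂' u)).sub ((h₂ u).mul (h₁' u))).congr_deriv (by ring)
  exact is_const_of_deriv_eq_zero (fun u => (h u).differentiableAt) (fun u => (h u).deriv) u 0

/-- Cross-differences of two solutions of a second order equation do not inherit the growth of the solutions:
they are controlled by the Wronskian. -/
theorem norm_cross_diff_le {y₁ y₁' y₂ y₂' p : ℂ → ℂ}
    (h₁ : ∀ u, HasDerivAt y₁ (y₁' u) u) (h₁' : ∀ u, HasDerivAt y₁' (p u * y₁ u) u)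
    (h₂ : ∀ u, HasDerivAt y₂ (y₂' u) u) (h₂' : ∀ u, HasDerivAt y₂' (p u * y₂ u) u)
    (u : ℂ) {s δ : ℝ} (hδ : 0 ≤ δ) (hs : 0 ≤ s)
    (hp : ∀ t ∈ Set.Ico 0 δ, ‖p (u + (t : ℂ))‖ ≤ s ^ 2) :
    s * ‖y₁ u * y₂ (u + δ) - y₂ u * y₁ (u + δ)‖
      ≤ ‖y₁ 0 * y₂' 0 - y₂ 0 * y₁' 0‖ * Real.exp (s * δ) := by
  have hshift : ∀ {y y' : ℂ → ℂ}, (∀ u, HasDerivAt y (y' u) u) → ∀ t : ℝ,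
      HasDerivAt (fun t : ℝ => y (u + t)) (y' (u + t)) t := fun h t =>
    ((h (u + t)).comp_const_add u (t : ℂ)).comp_ofReal
  have h := norm_le_of_second_order_linear (g := fun t : ℝ => y₁ u * y₂ (u + t) - y₂ u * y₁ (u + t))
    (g' := fun t : ℝ => y₁ u * y₂' (u + t) - y₂ u * y₁' (u + t)) (q := fun t : ℝ => p (u + t))
    hδ hs
    (fun t => ((hshift h₂ t).const_mul _).sub ((hshift h₁ t).const_mul _))
    (fun t => (((hshift h₂' t).const_mul (y₁ u)).sub
      ((hshift h₁' t).const_mul (y₂ u))).congr_deriv (by ring))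
    hp (by simp [mul_comm])
  simpa [wronskian_const h₁ h₁' h₂ h₂' u] using h

theorem exists_norm_Ai_cross_diff_le :
    ∃ K : ℝ, 0 ≤ K ∧ ∀ (u : ℂ) (s δ : ℝ), 0 ≤ δ → 1 ≤ s → ‖u‖ + δ ≤ s ^ 2 →
      ‖Ai (-ωc * u) * Ai (-1 * (u + δ)) - Ai (-ωc * (u + δ)) * Ai (-1 * u)‖
        ≤ K * Real.exp (s * δ) := by
  refine ⟨‖Ai (-ωc * 0) * (-1 * AiDeriv (-1 * 0)) - Ai (-1 * 0) * (-ωc * AiDeriv (-ωc * 0))‖,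
    norm_nonneg _, fun u s δ hδ hs hu => ?_⟩
  have h := norm_cross_diff_le (p := fun u => -u) (hasDerivAt_Ai_neg_mul ωc)
    (hasDerivAt_AiDeriv_neg_mul ωc_pow_three) (hasDerivAt_Ai_neg_mul 1)
    (hasDerivAt_AiDeriv_neg_mul (one_pow 3)) u hδ (zero_le_one.trans hs) (fun t ht => by
      rw [norm_neg]
      refine (norm_add_le _ _).trans ?_
      rw [Complex.norm_real, Real.norm_of_nonneg ht.1]
      linarith [ht.2])
  rw [mul_comm (Ai (-ωc * (u + δ)))]
  exact (le_mul_of_one_le_left (norm_nonneg _) hs).trans h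

theorem norm_Wf {p : ℝ} (hp : 0 < p) : ‖Wf (p ^ 3)‖ = p / (2 * π) := by
  have h : (p ^ 3) ^ ((1 : ℝ) / 3) = p := by
    rw [← Real.rpow_natCast, ← Real.rpow_mul hp.le]
    norm_num
  have he : ‖Complex.exp (-(π : ℂ) * Complex.I / 6)‖ = 1 := by
    rw [show -(π : ℂ) * Complex.I / 6 = ((-π / 6 : ℝ) : ℂ) * Complex.I by push_cast; ring,
      Complex.norm_exp_ofReal_mul_I]
  rw [Wf, h, norm_div, norm_mul, he, mul_one, Complex.norm_real, Real.norm_of_nonneg hp.le,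
    norm_mul, Complex.norm_real, Real.norm_of_nonneg pi_pos.le]
  norm_num

/-- Growth of `D_f` in the variables `p = f ^ (1 / 3)` and `t`, where `r = t ^ 2 * p ^ 2`. -/
theorem exists_norm_Df_le (κ η : ℝ) (hκ : 0 < κ) (hη : 0 < η) :
    ∃ C : ℝ, 0 < C ∧ ∀ (p t : ℝ) (z : ℂ), 0 < p → p ≤ 1 → 1 ≤ t → 1 ≤ t ^ 4 * p →
      ‖z‖ ≤ t ^ 2 * p ^ 2 →
      ‖Df κ η (p ^ 3) z‖
        ≤ C * Real.exp (4 / 3 * (t + 3 * κ) ^ 3 + (12 + 2 * κ) * (t + 3 * κ)) := by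
  obtain ⟨K, hK, hcross⟩ := exists_norm_Ai_cross_diff_le
  set A : ℝ := ‖airyCoeff 0‖ + ‖airyCoeff 1‖ with hA
  refine ⟨1 + 4 * π * A ^ 2 / η + 4 * π ^ 2 * A ^ 2 * K / η ^ 2, by positivity,
    fun p t z hp hp1 ht htp hz => ?_⟩
  set s : ℝ := t + 3 * κ with hs
  have hts : t ≤ s := by linarith
  have hs1 : 1 ≤ s := by linarith
  have hs0 : 0 ≤ s := by linarith
  have hexp (n : ℕ) : s ^ n ≤ Real.exp (n * s) := by
    rw [Real.exp_nat_mul]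
    exact pow_le_pow_left₀ hs0 (by linarith [Real.add_one_le_exp s]) n
  set M : ℝ := A * Real.exp (2 * s + 2 / 3 * s ^ 3) with hM
  have hAi {w : ℂ} (hw : ‖w‖ ≤ s ^ 2) : ‖Ai w‖ ≤ M := by
    refine (norm_Ai_le hs0 hw).trans ?_
    rw [hM, Real.exp_add, ← mul_assoc]
    gcongr
    have h1 : 1 ≤ s ^ 2 := one_le_pow₀ hs1
    have h2 : s ^ 2 ≤ Real.exp (2 * s) := by exact_mod_cast hexp 2
    calc ‖airyCoeff 0‖ + ‖airyCoeff 1‖ * s ^ 2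
        ≤ ‖airyCoeff 0‖ * s ^ 2 + ‖airyCoeff 1‖ * s ^ 2 := by
          gcongr
          exact le_mul_of_one_le_right (norm_nonneg _) h1
      _ = A * s ^ 2 := by rw [hA]; ring
      _ ≤ A * Real.exp (2 * s) := by gcongr
  have hv : (p ^ 3) ^ (-(2 : ℝ) / 3) = (p ^ 2)⁻¹ := by
    rw [← Real.rpow_natCast, ← Real.rpow_natCast, ← Real.rpow_mul hp.le, ← Real.rpow_neg hp.le]
    norm_num
  have hpc : (p : ℂ) ≠ 0 := by exact_mod_cast hp.ne'
  set um : ℂ := (z - κ * (p ^ 3 : ℝ)) * (((p ^ 2)⁻¹ : ℝ) : ℂ) with hum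
  set up : ℂ := (z + κ * (p ^ 3 : ℝ)) * (((p ^ 2)⁻¹ : ℝ) : ℂ) with hup
  have hdiff : up = um + ((2 * κ * p : ℝ) : ℂ) := by
    rw [hum, hup]
    push_cast
    field_simp
    ring
  have hκp : κ * p ≤ κ := mul_le_of_le_one_right hκ.le hp1
  have hs2 : t ^ 2 + 3 * κ ≤ s ^ 2 := by rw [hs]; nlinarith
  have hzv : ‖z * (((p ^ 2)⁻¹ : ℝ) : ℂ)‖ ≤ t ^ 2 := by
    rw [norm_mul, Complex.norm_real, Real.norm_of_nonneg (by positivity), ← div_eq_mul_inv,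
      div_le_iff₀ (by positivity)]
    exact hz
  have hκv : (κ : ℂ) * ((p ^ 3 : ℝ) : ℂ) * (((p ^ 2)⁻¹ : ℝ) : ℂ) = ((κ * p : ℝ) : ℂ) := by
    push_cast
    field_simp
  have hκn : ‖((κ * p : ℝ) : ℂ)‖ = κ * p := by
    rw [Complex.norm_real, Real.norm_of_nonneg (by positivity)]
  have humn : ‖um‖ ≤ t ^ 2 + κ * p := by
    rw [hum, sub_mul, hκv]
    exact (norm_sub_le _ _).trans (by rw [hκn]; gcongr)
  have hupn : ‖up‖ ≤ t ^ 2 + κ * p := by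
    rw [hup, add_mul, hκv]
    exact (norm_add_le _ _).trans (by rw [hκn]; gcongr)
  have hω {u : ℂ} (hu : ‖u‖ ≤ t ^ 2 + κ * p) : ‖Ai (-ωc * u)‖ ≤ M := by
    refine hAi ?_
    rw [norm_mul, norm_neg, norm_ωc, one_mul]
    linarith
  have h1 {u : ℂ} (hu : ‖u‖ ≤ t ^ 2 + κ * p) : ‖Ai (-1 * u)‖ ≤ M := by
    refine hAi ?_
    rw [norm_mul, norm_neg, norm_one, one_mul]
    linarith
  have hprod {u v : ℂ} (hu : ‖u‖ ≤ t ^ 2 + κ * p) (hv : ‖v‖ ≤ t ^ 2 + κ * p) :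
      ‖Ai (-ωc * u) * Ai (-1 * v)‖ ≤ M ^ 2 := by
    rw [norm_mul, sq]
    exact mul_le_mul (hω hu) (h1 hv) (norm_nonneg _) (by positivity)
  have hαP : alphaP κ (p ^ 3) z = Ai (-ωc * um) * Ai (-1 * um) := by
    rw [alphaP, hv, mul_assoc, ← hum, neg_mul (z - _), ← hum, neg_one_mul]
  have hαM : alphaM κ (p ^ 3) z = Ai (-ωc * up) * Ai (-1 * up) := by
    rw [alphaM, hv, mul_assoc, ← hup, neg_mul (z + _), ← hup, neg_one_mul]
  have hβP : betaP κ (p ^ 3) z = Ai (-ωc * up) * Ai (-1 * um) := by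
    rw [betaP, hv, mul_assoc, ← hup, neg_mul (z - _), ← hum, neg_one_mul]
  have hβM : betaM κ (p ^ 3) z = Ai (-ωc * um) * Ai (-1 * up) := by
    rw [betaM, hv, mul_assoc, ← hum, neg_mul (z + _), ← hup, neg_one_mul]
  have hβ : ‖betaM κ (p ^ 3) z - betaP κ (p ^ 3) z‖ ≤ K * Real.exp (2 * κ * s) := by
    rw [hβM, hβP, hdiff]
    refine (hcross um s (2 * κ * p) (by positivity) hs1 (by linarith)).trans ?_
    refine mul_le_mul_of_nonneg_left (Real.exp_le_exp.2 ?_) hK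
    nlinarith
  have hWinv : ‖Wf (p ^ 3)‖⁻¹ ≤ 2 * π * Real.exp (4 * s) := by
    rw [norm_Wf hp, inv_div, div_le_iff₀ hp]
    have h4 : t ^ 4 ≤ Real.exp (4 * s) :=
      (pow_le_pow_left₀ (by linarith) hts 4).trans (by exact_mod_cast hexp 4)
    have : 1 ≤ Real.exp (4 * s) * p := htp.trans (by gcongr)
    nlinarith [pi_pos]
  have hαterm : ‖(alphaP κ (p ^ 3) z + alphaM κ (p ^ 3) z) / (η * Wf (p ^ 3))‖
      ≤ (M ^ 2 + M ^ 2) * (η⁻¹ * (2 * π * Real.exp (4 * s))) := by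
    rw [norm_div, norm_mul, Complex.norm_real, Real.norm_of_nonneg hη.le, div_eq_mul_inv, mul_inv,
      hαP, hαM]
    have := (norm_add_le _ _).trans (add_le_add (hprod humn humn) (hprod hupn hupn))
    gcongr
  have hβterm : ‖betaP κ (p ^ 3) z * (betaM κ (p ^ 3) z - betaP κ (p ^ 3) z)
        / (η ^ 2 * Wf (p ^ 3) ^ 2)‖
      ≤ M ^ 2 * (K * Real.exp (2 * κ * s)) *
        ((η ^ 2)⁻¹ * (2 * π * Real.exp (4 * s)) ^ 2) := by
    rw [norm_div, norm_mul, norm_mul, norm_pow, norm_pow, Complex.norm_real,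
      Real.norm_of_nonneg hη.le, div_eq_mul_inv, mul_inv, ← inv_pow ‖Wf _‖]
    have : ‖betaP κ (p ^ 3) z‖ ≤ M ^ 2 := by rw [hβP]; exact hprod hupn humn
    gcongr
  have hM2 : M ^ 2 = A ^ 2 * Real.exp (4 * s + 4 / 3 * s ^ 3) := by
    rw [hM, mul_pow, ← Real.exp_nat_mul]
    congr 2
    push_cast
    ring
  have hα' : (M ^ 2 + M ^ 2) * (η⁻¹ * (2 * π * Real.exp (4 * s)))
      ≤ 4 * π * A ^ 2 / η * Real.exp (4 / 3 * s ^ 3 + (12 + 2 * κ) * s) := by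
    calc (M ^ 2 + M ^ 2) * (η⁻¹ * (2 * π * Real.exp (4 * s)))
        = 4 * π * A ^ 2 / η * Real.exp (4 * s + 4 / 3 * s ^ 3 + 4 * s) := by
          rw [hM2, Real.exp_add (4 * s + 4 / 3 * s ^ 3)]
          ring
      _ ≤ _ := by
          refine mul_le_mul_of_nonneg_left (Real.exp_le_exp.2 ?_) (by positivity)
          nlinarith
  have hβ' : M ^ 2 * (K * Real.exp (2 * κ * s)) * ((η ^ 2)⁻¹ * (2 * π * Real.exp (4 * s)) ^ 2)
      = 4 * π ^ 2 * A ^ 2 * K / η ^ 2 * Real.exp (4 / 3 * s ^ 3 + (12 + 2 * κ) * s) := by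
    rw [hM2, show 4 / 3 * s ^ 3 + (12 + 2 * κ) * s
      = 4 * s + 4 / 3 * s ^ 3 + 2 * κ * s + 4 * s + 4 * s by ring,
      Real.exp_add (_ + _ + _ + _), Real.exp_add (_ + _ + _), Real.exp_add (_ + _)]
    ring
  have hone : 1 ≤ Real.exp (4 / 3 * s ^ 3 + (12 + 2 * κ) * s) :=
    Real.one_le_exp (by positivity)
  rw [Df]
  refine (norm_add₃_le).trans ?_
  rw [norm_one]
  linarith

/-- Cubic growth with a larger leading coefficient absorbs a shift of the variable and all lower
order terms. -/
theorem exists_forall_shifted_cubic_le (κ L c B : ℝ) (hκ : 0 < κ) (hL : 0 < L) (hc : 1 < c) :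
    ∃ T : ℝ, 1 ≤ T ∧ ∀ t, T ≤ t →
      B + 4 / 3 * (t + 3 * κ) ^ 3 + L * (t + 3 * κ) ≤ 4 / 3 * c * t ^ 3 := by
  set Q : ℝ := |B| + 4 / 3 * (9 * κ + 27 * κ ^ 2 + 27 * κ ^ 3) + L * (1 + 3 * κ) with hQ
  have hQ0 : 0 ≤ Q := by positivity
  refine ⟨max 1 (Q / (4 / 3 * (c - 1))), le_max_left _ _, fun t ht => ?_⟩
  have ht1 : 1 ≤ t := (le_max_left _ _).trans ht
  have htQ : Q ≤ t * (4 / 3 * (c - 1)) :=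
    (div_le_iff₀ (by linarith)).1 ((le_max_right _ _).trans ht)
  have h2 : t ≤ t ^ 2 := by nlinarith
  have h2' : 1 ≤ t ^ 2 := by nlinarith
  have hlow : B + 4 / 3 * (t + 3 * κ) ^ 3 + L * (t + 3 * κ) ≤ 4 / 3 * t ^ 3 + Q * t ^ 2 := by
    have e1 : B ≤ |B| * t ^ 2 := (le_abs_self B).trans (le_mul_of_one_le_right (abs_nonneg B) h2')
    have e2 : 27 * κ ^ 2 * t ≤ 27 * κ ^ 2 * t ^ 2 := by gcongr
    have e3 : 27 * κ ^ 3 ≤ 27 * κ ^ 3 * t ^ 2 := le_mul_of_one_le_right (by positivity) h2'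
    have e4 : L * t ≤ L * t ^ 2 := by gcongr
    have e5 : L * (3 * κ) ≤ L * (3 * κ) * t ^ 2 := le_mul_of_one_le_right (by positivity) h2'
    rw [hQ]
    linarith
  have : Q * t ^ 2 ≤ t * (4 / 3 * (c - 1)) * t ^ 2 := by gcongr
  linarith

/-- Growth bound for `D_f`: for any `c > 1` and small `f`, on any disk of
radius `r > f^a` one has `|D_f(z)| ≤ (1/(2rη²))·exp(4c·r^{3/2}/(3f))`. -/
theorem stmt16 (κ η : ℝ) (hκ : 0 < κ) (hη : 0 < η) (c a : ℝ)
    (hc : 1 < c) (ha0 : 0 < a) (ha1 : a < 1 / 2) :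
    ∃ f₀ > (0 : ℝ), ∀ f : ℝ, 0 < f → f < f₀ → ∀ r : ℝ, f ^ a < r →
      ∀ z : ℂ, ‖z‖ < r →
        ‖Df κ η f z‖ ≤
          (1 / (2 * r * η ^ 2)) * Real.exp (4 * c * r ^ ((3 : ℝ) / 2) / (3 * f)) := by
  obtain ⟨C, hC, hD⟩ := exists_norm_Df_le κ η hκ hη
  obtain ⟨T, hT1, hT⟩ := exists_forall_shifted_cubic_le κ (14 + 2 * κ) c
    (Real.log (2 * η ^ 2 * C)) hκ (by positivity) hc
  have hT0 : 0 < T := by linarith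
  refine ⟨(T ^ 12)⁻¹, by positivity, fun f hf hfT r hr z hz => ?_⟩
  have hf1 : f < 1 := hfT.trans_le (inv_le_one_of_one_le₀ (one_le_pow₀ hT1))
  obtain ⟨p, hp, rfl⟩ : ∃ p : ℝ, 0 < p ∧ p ^ 3 = f :=
    ⟨f ^ ((1 : ℝ) / 3), by positivity, by
      rw [← Real.rpow_natCast, ← Real.rpow_mul hf.le]; norm_num⟩
  have hr0 : 0 < r := (Real.rpow_pos_of_pos hf a).trans hr
  obtain ⟨t, ht, rfl⟩ : ∃ t : ℝ, 0 < t ∧ t ^ 2 * p ^ 2 = r :=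
    ⟨Real.sqrt r / p, by positivity, by
      rw [div_pow, Real.sq_sqrt hr0.le]; field_simp⟩
  have hp1 : p ≤ 1 := (pow_le_one_iff_of_nonneg hp.le three_ne_zero).1 hf1.le
  have hsq : p ^ 3 < (t ^ 2 * p ^ 2) ^ 2 := by
    have h : (p ^ 3) ^ ((1 : ℝ) / 2) < t ^ 2 * p ^ 2 :=
      (Real.rpow_le_rpow_of_exponent_ge hf hf1.le ha1.le).trans_lt hr
    rw [← Real.sqrt_eq_rpow] at h
    exact (Real.sqrt_lt' hr0).1 h
  have htp : 1 < t ^ 4 * p := by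
    have : p ^ 3 * 1 < p ^ 3 * (t ^ 4 * p) := by nlinarith
    exact lt_of_mul_lt_mul_left this hf.le
  have hpT : p * T ^ 4 < 1 := by
    rw [lt_inv_comm₀ hf (by positivity), ← one_div, lt_div_iff₀ hf] at hfT
    refine (pow_lt_one_iff_of_nonneg (by positivity) three_ne_zero).1 ?_
    calc (p * T ^ 4) ^ 3 = T ^ 12 * p ^ 3 := by ring
      _ < 1 := hfT
  have hTt : T ≤ t := by
    refine le_of_lt (lt_of_pow_lt_pow_left₀ 4 ht.le ?_)
    have : p * T ^ 4 < p * t ^ 4 := by linarith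
    exact lt_of_mul_lt_mul_left this hp.le
  have ht1 : 1 ≤ t := hT1.trans hTt
  have hpow : (t ^ 2 * p ^ 2) ^ ((3 : ℝ) / 2) = t ^ 3 * p ^ 3 := by
    rw [← mul_pow, ← mul_pow, ← Real.rpow_natCast, ← Real.rpow_mul (by positivity),
      ← Real.rpow_natCast (t * p) 3]
    norm_num
  have hexponent : 4 * c * (t ^ 2 * p ^ 2) ^ ((3 : ℝ) / 2) / (3 * p ^ 3) = 4 / 3 * c * t ^ 3 := by
    rw [hpow]
    field_simp
  rw [hexponent, one_div, inv_mul_eq_div, le_div_iff₀ (by positivity)]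
  have hr_le : t ^ 2 * p ^ 2 ≤ Real.exp (2 * (t + 3 * κ)) := by
    have h1 : t ^ 2 * p ^ 2 ≤ t ^ 2 :=
      mul_le_of_le_one_right (by positivity) (pow_le_one₀ hp.le hp1)
    have h2 : t ≤ Real.exp (t + 3 * κ) := by linarith [Real.add_one_le_exp (t + 3 * κ)]
    have h3 : Real.exp (2 * (t + 3 * κ)) = Real.exp (t + 3 * κ) ^ 2 := by
      rw [← Real.exp_nat_mul]; norm_num
    rw [h3]
    exact h1.trans (pow_le_pow_left₀ ht.le h2 2)
  calc ‖Df κ η (p ^ 3) z‖ * (2 * (t ^ 2 * p ^ 2) * η ^ 2)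
      ≤ C * Real.exp (4 / 3 * (t + 3 * κ) ^ 3 + (12 + 2 * κ) * (t + 3 * κ)) *
        (2 * Real.exp (2 * (t + 3 * κ)) * η ^ 2) := by
        have := hD p t z hp hp1 ht1 htp.le hz.le
        gcongr
    _ = Real.exp (Real.log (2 * η ^ 2 * C) + 4 / 3 * (t + 3 * κ) ^ 3
        + (14 + 2 * κ) * (t + 3 * κ)) := by
        rw [show Real.log (2 * η ^ 2 * C) + 4 / 3 * (t + 3 * κ) ^ 3
          + (14 + 2 * κ) * (t + 3 * κ) = Real.log (2 * η ^ 2 * C)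
          + (4 / 3 * (t + 3 * κ) ^ 3 + (12 + 2 * κ) * (t + 3 * κ)) + 2 * (t + 3 * κ) by ring,
          Real.exp_add (_ + _), Real.exp_add (Real.log _), Real.exp_log (by positivity)]
        ring
    _ ≤ Real.exp (4 / 3 * c * t ^ 3) := Real.exp_le_exp.2 (hT t hTt)
end

section
/- Fix real κ > 0, η > 0 and ε > 0. There exist complex constants c₁, c₂, c₃ depending only on η and κ, with c₁ ≠ 0, and constants C > 0 and f₀ > 0, such that for all f ∈ (0, f₀) and all z ∈ ℂ with |z| < f^{2/3 + ε}: |D_f(z) − f^{−1/3}·(c₁ + c₂·z·f^{−2/3} + c₃·f^{1/3})| ≤ C·f^{−1/3}·(|z|·f^{−2/3} + f^{1/3})². -/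
open Real

open Filter Topology Asymptotics

namespace StarkAiry

lemma norm_airyCoeff_le (k : ℕ) : ‖airyCoeff k‖ ≤ ‖airyCoeff 0‖ + ‖airyCoeff 1‖ := by
  induction k using Nat.strong_induction_on with
  | _ k ih =>
    match k with
    | 0 => simp
    | 1 => simp
    | 2 =>
      have h : airyCoeff 2 = 0 := by rw [airyCoeff]
      rw [h, norm_zero]
      positivity
    | k + 3 =>
      have hrec : airyCoeff (k + 3) = airyCoeff k / (((k : ℂ) + 3) * ((k : ℂ) + 2)) := by
        rw [airyCoeff]
      rw [hrec, norm_div]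
      refine (div_le_self (norm_nonneg _) ?_).trans (ih k (by omega))
      have h : ((k : ℂ) + 3) * ((k : ℂ) + 2) = (((k + 3) * (k + 2) : ℕ) : ℂ) := by push_cast; ring
      rw [h, Complex.norm_natCast]
      exact_mod_cast Nat.succ_le_of_lt (by positivity)

lemma norm_pow_succ_sub_pow_succ_le {x y : ℂ} {s : ℝ} (hx : ‖x‖ ≤ s) (hy : ‖y‖ ≤ s) (n : ℕ) :
    ‖x ^ (n + 1) - y ^ (n + 1)‖ ≤ (n + 1) * ‖x - y‖ * s ^ n := by
  have hs : 0 ≤ s := (norm_nonneg x).trans hx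
  induction n with
  | zero => simp
  | succ n ih =>
    have h : x ^ (n + 1 + 1) - y ^ (n + 1 + 1)
        = x * (x ^ (n + 1) - y ^ (n + 1)) + (x - y) * y ^ (n + 1) := by ring
    calc ‖x ^ (n + 1 + 1) - y ^ (n + 1 + 1)‖
        ≤ ‖x‖ * ‖x ^ (n + 1) - y ^ (n + 1)‖ + ‖x - y‖ * ‖y‖ ^ (n + 1) := by
          rw [h]
          refine (norm_add_le _ _).trans ?_
          rw [norm_mul, norm_mul, norm_pow]
      _ ≤ s * ((n + 1) * ‖x - y‖ * s ^ n) + ‖x - y‖ * s ^ (n + 1) := by gcongr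
      _ = ((n + 1 : ℕ) + 1) * ‖x - y‖ * s ^ (n + 1) := by push_cast; ring

lemma summable_airy {x : ℂ} (hx : ‖x‖ ≤ 1 / 2) : Summable fun k : ℕ => airyCoeff k * x ^ k := by
  refine Summable.of_norm_bounded
    (g := fun k : ℕ => (‖airyCoeff 0‖ + ‖airyCoeff 1‖) * (1 / 2 : ℝ) ^ k)
    (summable_geometric_two.mul_left _) fun k => ?_
  rw [norm_mul, norm_pow]
  gcongr
  exact norm_airyCoeff_le k

/-- Lipschitz bound for the remainder of the first-order Taylor polynomial of `Ai`;
the second-order coefficient vanishes, so the Lipschitz constant is quadratically small. -/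
lemma exists_norm_Ai_sub_le : ∃ K : ℝ, ∀ x y : ℂ, ‖x‖ ≤ 1 / 2 → ‖y‖ ≤ 1 / 2 →
    ‖Ai x - Ai y - airyCoeff 1 * (x - y)‖ ≤ K * (‖x - y‖ * (‖x‖ + ‖y‖) ^ 2) := by
  set M : ℝ := ‖airyCoeff 0‖ + ‖airyCoeff 1‖
  have hsum : Summable fun k : ℕ => M * (((k : ℝ) + 3) * (1 / 2 : ℝ) ^ k) := by
    refine Summable.mul_left _ ?_
    simp_rw [add_mul]
    refine Summable.add ?_ (summable_geometric_two.mul_left _)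
    simpa using summable_pow_mul_geometric_of_norm_lt_one 1 (r := (1 / 2 : ℝ)) (by norm_num)
  refine ⟨∑' k : ℕ, M * (((k : ℝ) + 3) * (1 / 2 : ℝ) ^ k), fun x y hx hy => ?_⟩
  have hX := (summable_airy hx).sum_add_tsum_nat_add 3
  have hY := (summable_airy hy).sum_add_tsum_nat_add 3
  have hsX := (summable_nat_add_iff 3).2 (summable_airy hx)
  have hsY := (summable_nat_add_iff 3).2 (summable_airy hy)
  have ha2 : airyCoeff 2 = 0 := by rw [airyCoeff]
  have h : Ai x - Ai y - airyCoeff 1 * (x - y)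
      = ∑' k : ℕ, airyCoeff (k + 3) * (x ^ (k + 3) - y ^ (k + 3)) := by
    simp_rw [mul_sub]
    rw [hsX.tsum_sub hsY, Ai, Ai, ← hX, ← hY]
    simp only [Finset.sum_range_succ, Finset.sum_range_zero, ha2]
    ring
  rw [h, ← tsum_mul_right]
  refine tsum_of_norm_bounded (hsum.mul_right _).hasSum fun k => ?_
  set s : ℝ := max ‖x‖ ‖y‖
  have hxs : ‖x‖ ≤ s := le_max_left _ _
  have hs0 : 0 ≤ s := (norm_nonneg x).trans hxs
  have hs : s ≤ 1 / 2 := max_le hx hy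
  have hs' : s ≤ ‖x‖ + ‖y‖ := max_le (by simp) (by simp)
  have hp := norm_pow_succ_sub_pow_succ_le hxs (le_max_right _ _) (k + 2)
  calc ‖airyCoeff (k + 3) * (x ^ (k + 3) - y ^ (k + 3))‖
      ≤ M * (((k + 2 : ℕ) + 1) * ‖x - y‖ * s ^ (k + 2)) := by
        rw [norm_mul]
        exact mul_le_mul (norm_airyCoeff_le _) hp (norm_nonneg _) (by positivity)
    _ = M * (((k : ℝ) + 3) * s ^ k) * (‖x - y‖ * s ^ 2) := by push_cast; ring
    _ ≤ M * (((k : ℝ) + 3) * (1 / 2) ^ k) * (‖x - y‖ * (‖x‖ + ‖y‖) ^ 2) := by gcongr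

lemma Ai_zero : Ai 0 = airyCoeff 0 := by
  rw [Ai, tsum_eq_single 0 (fun k hk => by simp [hk])]
  simp

/-- The filter along which `(u, t) → (0, 0)` with `t > 0`. -/
noncomputable abbrev originFilter : Filter (ℂ × ℝ) := 𝓝 (0 : ℂ) ×ˢ 𝓝[>] (0 : ℝ)

/-- The scale `(|u| + t)²` in which errors are measured. -/
noncomputable abbrev scaleSq (q : ℂ × ℝ) : ℝ := (‖q.1‖ + q.2) ^ 2

lemma originFilter_le : originFilter ≤ 𝓝 (0 : ℂ × ℝ) := by
  rw [show (0 : ℂ × ℝ) = (0, 0) from rfl, nhds_prod_eq]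
  exact Filter.prod_mono le_rfl nhdsWithin_le_nhds

lemma eventually_pos : ∀ᶠ q in originFilter, 0 < q.2 :=
  tendsto_snd.eventually self_mem_nhdsWithin

lemma isBigO_one_of_continuous {g : ℂ × ℝ → ℂ} (hg : Continuous g) :
    g =O[originFilter] fun _ => (1 : ℝ) :=
  ((hg.tendsto 0).mono_left originFilter_le).isBigO_one ℝ

lemma isBigO_scaleSq_one : scaleSq =O[originFilter] fun _ => (1 : ℝ) := by
  have hg : Continuous scaleSq := by unfold scaleSq; fun_prop
  exact ((hg.tendsto 0).mono_left originFilter_le).isBigO_one ℝ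

lemma mul_sub_mul_isBigO {X Y x y : ℂ × ℝ → ℂ}
    (hX : (fun q => X q - x q) =O[originFilter] scaleSq)
    (hY : (fun q => Y q - y q) =O[originFilter] scaleSq)
    (hx : Continuous x) (hy : Continuous y) :
    (fun q => X q * Y q - x q * y q) =O[originFilter] scaleSq := by
  have hY1 : Y =O[originFilter] fun _ => (1 : ℝ) := by
    simpa using (hY.trans isBigO_scaleSq_one).add (isBigO_one_of_continuous hy)
  have h1 := hX.mul hY1
  have h2 := (isBigO_one_of_continuous hx).mul hY
  simp only [mul_one, one_mul] at h1 h2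
  exact (h1.add h2).congr_left fun q => by ring

lemma norm_add_mul_le (σ : ℂ) (u : ℂ) {t : ℝ} (ht : 0 ≤ t) :
    ‖u + σ * t‖ ≤ (1 + ‖σ‖) * (‖u‖ + t) := by
  have h : ‖u + σ * t‖ ≤ ‖u‖ + ‖σ‖ * t := by
    simpa [abs_of_nonneg ht] using norm_add_le u (σ * t)
  nlinarith [norm_nonneg u, norm_nonneg σ, mul_nonneg (norm_nonneg σ) (norm_nonneg u)]

lemma eventually_norm_le (c σ : ℂ) :
    ∀ᶠ q : ℂ × ℝ in originFilter, ‖-c * (q.1 + σ * q.2)‖ ≤ 1 / 2 := by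
  have hg : Continuous fun q : ℂ × ℝ => ‖-c * (q.1 + σ * q.2)‖ := by fun_prop
  have h := (hg.tendsto 0).mono_left originFilter_le
  simp only [Prod.fst_zero, Prod.snd_zero, Complex.ofReal_zero, mul_zero, add_zero,
    norm_zero] at h
  exact h.eventually (eventually_le_nhds (by norm_num))

lemma mul_linear_isBigO (σ τ : ℂ) :
    (fun q : ℂ × ℝ => (q.1 + σ * q.2) * (q.1 + τ * q.2)) =O[originFilter] scaleSq := by
  refine IsBigO.of_bound ((1 + ‖σ‖) * (1 + ‖τ‖)) ?_
  filter_upwards [eventually_pos] with q hq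
  rw [norm_mul, Real.norm_of_nonneg (sq_nonneg _)]
  calc _ ≤ ((1 + ‖σ‖) * (‖q.1‖ + q.2)) * ((1 + ‖τ‖) * (‖q.1‖ + q.2)) :=
        mul_le_mul (norm_add_mul_le σ _ hq.le) (norm_add_mul_le τ _ hq.le) (norm_nonneg _)
          (by positivity)
    _ = _ := by ring

lemma Ai_linear_isBigO (c σ : ℂ) :
    (fun q : ℂ × ℝ => Ai (-c * (q.1 + σ * q.2)) -
      (airyCoeff 0 - airyCoeff 1 * c * (q.1 + σ * q.2))) =O[originFilter] scaleSq := by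
  obtain ⟨K, hK⟩ := exists_norm_Ai_sub_le
  have h : (fun q : ℂ × ℝ => Ai (-c * (q.1 + σ * q.2)) -
      (airyCoeff 0 - airyCoeff 1 * c * (q.1 + σ * q.2))) =O[originFilter]
      fun q : ℂ × ℝ => (-c * (q.1 + σ * q.2)) ^ 2 := by
    refine IsBigO.of_bound (|K| * (1 / 2)) ?_
    filter_upwards [eventually_norm_le c σ] with q hq
    have h0 := hK _ 0 hq (by simp)
    rw [Ai_zero] at h0
    set v := -c * (q.1 + σ * q.2) with hv
    have e : Ai v - (airyCoeff 0 - airyCoeff 1 * c * (q.1 + σ * q.2))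
        = Ai v - airyCoeff 0 - airyCoeff 1 * (v - 0) := by rw [hv]; ring
    rw [e]
    refine h0.trans ?_
    rw [sub_zero, norm_zero, add_zero, norm_pow, mul_assoc]
    exact mul_le_mul (le_abs_self K) (by gcongr) (by positivity) (abs_nonneg K)
  refine h.trans (((mul_linear_isBigO σ σ).const_mul_left (c ^ 2)).congr_left fun q => ?_)
  ring

lemma Ai_diff_isBigO (c σ : ℂ) :
    (fun q : ℂ × ℝ => (Ai (-c * (q.1 + -σ * q.2)) - Ai (-c * (q.1 + σ * q.2))) / q.2 -
      2 * σ * airyCoeff 1 * c) =O[originFilter] scaleSq := by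
  obtain ⟨K, hK⟩ := exists_norm_Ai_sub_le
  refine IsBigO.of_bound (|K| * (‖2 * c * σ‖ * (2 * ‖c‖ * (1 + ‖σ‖)) ^ 2)) ?_
  filter_upwards [eventually_pos, eventually_norm_le c σ, eventually_norm_le c (-σ)]
    with q hq h1 h2
  have hq' : (q.2 : ℂ) ≠ 0 := by exact_mod_cast hq.ne'
  have h := hK _ _ h2 h1
  have e : (Ai (-c * (q.1 + -σ * q.2)) - Ai (-c * (q.1 + σ * q.2))) / q.2 -
      2 * σ * airyCoeff 1 * c
      = (Ai (-c * (q.1 + -σ * q.2)) - Ai (-c * (q.1 + σ * q.2)) -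
        airyCoeff 1 * (-c * (q.1 + -σ * q.2) - -c * (q.1 + σ * q.2))) / q.2 := by
    field_simp
    ring
  rw [e, norm_div, Complex.norm_real, Real.norm_of_nonneg hq.le, div_le_iff₀ hq,
    Real.norm_of_nonneg (sq_nonneg _)]
  refine h.trans ?_
  have hd : ‖-c * (q.1 + -σ * q.2) - -c * (q.1 + σ * q.2)‖ = ‖2 * c * σ‖ * q.2 := by
    rw [show -c * (q.1 + -σ * q.2) - -c * (q.1 + σ * q.2) = 2 * c * σ * (q.2 : ℂ) by ring,
      norm_mul, Complex.norm_real, Real.norm_of_nonneg hq.le]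
  have hm := norm_add_mul_le σ q.1 hq.le
  have hp := norm_add_mul_le (-σ) q.1 hq.le
  rw [norm_neg] at hp
  have hS : ‖-c * (q.1 + -σ * q.2)‖ + ‖-c * (q.1 + σ * q.2)‖
      ≤ 2 * ‖c‖ * (1 + ‖σ‖) * (‖q.1‖ + q.2) := by
    rw [norm_mul, norm_mul, norm_neg]
    nlinarith [mul_le_mul_of_nonneg_left hm (norm_nonneg c),
      mul_le_mul_of_nonneg_left hp (norm_nonneg c)]
  rw [hd]
  calc K * (‖2 * c * σ‖ * q.2 * (‖-c * (q.1 + -σ * q.2)‖ + ‖-c * (q.1 + σ * q.2)‖) ^ 2)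
      ≤ |K| * (‖2 * c * σ‖ * q.2 * (2 * ‖c‖ * (1 + ‖σ‖) * (‖q.1‖ + q.2)) ^ 2) := by
        refine mul_le_mul (le_abs_self K) ?_ (by positivity) (abs_nonneg K)
        gcongr
    _ = _ := by ring

/-- Expansion of the product of two Airy factors. -/
lemma Ai_mul_Ai_isBigO (σ τ : ℂ) :
    (fun q : ℂ × ℝ => Ai (-ωc * (q.1 + σ * q.2)) * Ai (-1 * (q.1 + τ * q.2)) -
      (airyCoeff 0 ^ 2 - airyCoeff 0 * airyCoeff 1 *
        (ωc * (q.1 + σ * q.2) + (q.1 + τ * q.2)))) =O[originFilter] scaleSq := by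
  have h := mul_sub_mul_isBigO (Ai_linear_isBigO ωc σ) (Ai_linear_isBigO 1 τ)
    (by fun_prop) (by fun_prop)
  refine (h.add ((mul_linear_isBigO σ τ).const_mul_left
    (airyCoeff 1 ^ 2 * ωc))).congr_left fun q => ?_
  ring

/-- The rescaled determinant `f^{1/3} D_f` in the variables `u = z f^{-2/3}`, `t = f^{1/3}`,
with `w = W f^{-1/3}`. -/
noncomputable def scaledDet (σ η w : ℂ) (q : ℂ × ℝ) : ℂ :=
  q.2 + (Ai (-ωc * (q.1 + -σ * q.2)) * Ai (-1 * (q.1 + -σ * q.2)) +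
      Ai (-ωc * (q.1 + σ * q.2)) * Ai (-1 * (q.1 + σ * q.2))) / (η * w) +
    Ai (-ωc * (q.1 + σ * q.2)) * Ai (-1 * (q.1 + -σ * q.2)) *
      ((Ai (-ωc * (q.1 + -σ * q.2)) * Ai (-1 * (q.1 + σ * q.2)) -
        Ai (-ωc * (q.1 + σ * q.2)) * Ai (-1 * (q.1 + -σ * q.2))) / q.2) / (η ^ 2 * w ^ 2)

lemma scaledDet_isBigO (σ η w : ℂ) : ∃ c₂ c₃ : ℂ,
    (fun q : ℂ × ℝ => scaledDet σ η w q -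
      (2 * airyCoeff 0 ^ 2 / (η * w) +
        2 * σ * airyCoeff 0 ^ 3 * airyCoeff 1 * (ωc - 1) / (η ^ 2 * w ^ 2) +
        c₂ * q.1 + c₃ * q.2)) =O[originFilter] scaleSq := by
  set a := airyCoeff 0 with ha
  set b := airyCoeff 1 with hb
  have hdiff := (mul_sub_mul_isBigO (Ai_diff_isBigO ωc σ) (Ai_linear_isBigO 1 σ)
    (by fun_prop) (by fun_prop)).sub
    (mul_sub_mul_isBigO (Ai_linear_isBigO ωc σ) (Ai_diff_isBigO 1 σ)
    (by fun_prop) (by fun_prop))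
  have hquot : (fun q : ℂ × ℝ => (Ai (-ωc * (q.1 + -σ * q.2)) * Ai (-1 * (q.1 + σ * q.2)) -
      Ai (-ωc * (q.1 + σ * q.2)) * Ai (-1 * (q.1 + -σ * q.2))) / q.2 -
      2 * σ * a * b * (ωc - 1)) =O[originFilter] scaleSq :=
    hdiff.congr_left fun q => by rw [← ha, ← hb]; ring
  have hprod := mul_sub_mul_isBigO (Ai_mul_Ai_isBigO σ (-σ)) hquot (by fun_prop) (by fun_prop)
  have halpha := (Ai_mul_Ai_isBigO (-σ) (-σ)).add (Ai_mul_Ai_isBigO σ σ)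
  refine ⟨-2 * a * b * (1 + ωc) / (η * w) -
      2 * σ * a ^ 2 * b ^ 2 * (ωc - 1) * (1 + ωc) / (η ^ 2 * w ^ 2),
    1 - 2 * σ ^ 2 * a ^ 2 * b ^ 2 * (ωc - 1) ^ 2 / (η ^ 2 * w ^ 2), ?_⟩
  refine ((halpha.const_mul_left (η * w)⁻¹).add
    (hprod.const_mul_left (η ^ 2 * w ^ 2)⁻¹)).congr_left fun q => ?_
  rw [scaledDet, ← ha, ← hb]
  ring

lemma airyCoeff_zero_eq : ∃ a : ℝ, 0 < a ∧ airyCoeff 0 = a := by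
  refine ⟨(3 : ℝ) ^ (-(2 : ℝ) / 3) / Real.Gamma (2 / 3),
    div_pos (by positivity) (Real.Gamma_pos_of_pos (by norm_num)), ?_⟩
  rw [airyCoeff, Complex.ofReal_div, Complex.ofReal_cpow (by norm_num), ← Complex.Gamma_ofReal]
  push_cast
  rfl

lemma airyCoeff_one_eq : ∃ b : ℝ, b < 0 ∧ airyCoeff 1 = b := by
  refine ⟨-((3 : ℝ) ^ (-(1 : ℝ) / 3) / Real.Gamma (1 / 3)),
    neg_neg_of_pos (div_pos (by positivity) (Real.Gamma_pos_of_pos (by norm_num))), ?_⟩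
  rw [airyCoeff, Complex.ofReal_neg, Complex.ofReal_div, Complex.ofReal_cpow (by norm_num),
    ← Complex.Gamma_ofReal]
  push_cast
  rfl

lemma omega_sub_one : ωc - 1 = -(√3 : ℝ) * Complex.exp (-(π : ℂ) * Complex.I / 6) := by
  have h1 : ωc = ((Real.cos (π - π / 3) : ℝ) : ℂ) + (Real.sin (π - π / 3) : ℝ) * Complex.I := by
    rw [ωc, Complex.ofReal_cos, Complex.ofReal_sin, ← Complex.exp_mul_I]
    congr 1
    push_cast
    ring
  have h2 : Complex.exp (-(π : ℂ) * Complex.I / 6)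
      = ((Real.cos (-(π / 6)) : ℝ) : ℂ) + (Real.sin (-(π / 6)) : ℝ) * Complex.I := by
    rw [Complex.ofReal_cos, Complex.ofReal_sin, ← Complex.exp_mul_I]
    congr 1
    push_cast
    ring
  have h3 : ((√3 : ℝ) : ℂ) * (√3 : ℝ) = 3 := by
    rw [← Complex.ofReal_mul, Real.mul_self_sqrt (by norm_num)]
    norm_num
  rw [h1, h2, Real.cos_pi_sub, Real.sin_pi_sub, Real.cos_neg, Real.sin_neg, Real.cos_pi_div_three,
    Real.sin_pi_div_three, Real.cos_pi_div_six, Real.sin_pi_div_six]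
  push_cast
  linear_combination (1 / 2 : ℂ) * h3

/-- The unit-scale Wronskian `W f^{-1/3}`. -/
noncomputable def wronskianUnit : ℂ := Complex.exp (-(π : ℂ) * Complex.I / 6) / (2 * π)

lemma wronskianUnit_ne_zero : wronskianUnit ≠ 0 :=
  div_ne_zero (Complex.exp_ne_zero _) (by simp [Real.pi_ne_zero])

lemma omega_sub_one_eq : ωc - 1 = ((-(2 * π * √3) : ℝ) : ℂ) * wronskianUnit := by
  have hpi : (π : ℂ) ≠ 0 := by exact_mod_cast Real.pi_ne_zero
  rw [omega_sub_one, wronskianUnit]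
  push_cast
  field_simp

lemma leadingCoeff_ne_zero {κ η : ℝ} (hκ : 0 < κ) (hη : 0 < η) :
    2 * airyCoeff 0 ^ 2 / (η * wronskianUnit) +
      2 * κ * airyCoeff 0 ^ 3 * airyCoeff 1 * (ωc - 1) / (η ^ 2 * wronskianUnit ^ 2) ≠ 0 := by
  obtain ⟨a, ha, hA⟩ := airyCoeff_zero_eq
  obtain ⟨b, hb, hB⟩ := airyCoeff_one_eq
  have hw := wronskianUnit_ne_zero
  have hη' : (η : ℂ) ≠ 0 := by exact_mod_cast hη.ne'
  rw [hA, hB, omega_sub_one_eq]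
  have e : 2 * (a : ℂ) ^ 2 / (η * wronskianUnit) +
      2 * κ * (a : ℂ) ^ 3 * b * (((-(2 * π * √3) : ℝ) : ℂ) * wronskianUnit) /
        (η ^ 2 * wronskianUnit ^ 2)
      = ((2 * a ^ 2 * (η + κ * (a * -b) * (2 * π * √3)) / η ^ 2 : ℝ) : ℂ) / wronskianUnit := by
    push_cast
    field_simp
  rw [e]
  refine div_ne_zero ?_ hw
  have hb' : 0 < -b := neg_pos.2 hb
  exact_mod_cast (show 0 < 2 * a ^ 2 * (η + κ * (a * -b) * (2 * π * √3)) / η ^ 2 by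
    positivity).ne'

lemma Df_eq_scaledDet (κ η : ℝ) {f : ℝ} (hf : 0 < f) (z : ℂ) :
    Df κ η f z = ((f ^ (-(1 : ℝ) / 3) : ℝ) : ℂ) *
      scaledDet κ η wronskianUnit
        (z * ((f ^ (-(2 : ℝ) / 3) : ℝ) : ℂ), f ^ ((1 : ℝ) / 3)) := by
  have hs : (f : ℂ) * ((f ^ (-(2 : ℝ) / 3) : ℝ) : ℂ) = ((f ^ ((1 : ℝ) / 3) : ℝ) : ℂ) := by
    rw [← Complex.ofReal_mul]
    congr 1
    nth_rewrite 1 [← Real.rpow_one f]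
    rw [← Real.rpow_add hf]
    norm_num
  have hr : f ^ (-(1 : ℝ) / 3) = (f ^ ((1 : ℝ) / 3))⁻¹ := by
    rw [← Real.rpow_neg hf.le]
    norm_num
  have ht : ((f ^ ((1 : ℝ) / 3) : ℝ) : ℂ) ≠ 0 := by
    exact_mod_cast (Real.rpow_pos_of_pos hf _).ne'
  have hW : Wf f = ((f ^ ((1 : ℝ) / 3) : ℝ) : ℂ) * wronskianUnit := by
    rw [Wf, wronskianUnit]
    ring
  rw [hr, Df, hW, alphaP, alphaM, betaP, betaM, scaledDet]
  generalize ((f ^ (-(2 : ℝ) / 3) : ℝ) : ℂ) = s at *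
  generalize f ^ ((1 : ℝ) / 3) = t at *
  have hm (c : ℂ) : c * (z - κ * f) * s = c * (z * s + -κ * t) := by
    linear_combination -c * κ * hs
  have hp (c : ℂ) : c * (z + κ * f) * s = c * (z * s + κ * t) := by
    linear_combination c * κ * hs
  have hm1 : -(z - κ * f) * s = -1 * (z * s + -κ * t) := by
    linear_combination κ * hs
  have hp1 : -(z + κ * f) * s = -1 * (z * s + κ * t) := by
    linear_combination -κ * hs
  rw [hm, hp, hm1, hp1]
  have hw := wronskianUnit_ne_zero
  push_cast
  generalize Ai (-ωc * (z * s + -κ * t)) = Bm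
  generalize Ai (-ωc * (z * s + κ * t)) = Bp
  generalize Ai (-1 * (z * s + -κ * t)) = Am
  generalize Ai (-1 * (z * s + κ * t)) = Ap
  rw [mul_add, mul_add, inv_mul_cancel₀ ht]
  simp only [div_eq_mul_inv, mul_inv, mul_pow]
  ring

end StarkAiry

open StarkAiry in
/-- Expansion of `D_f` near the origin: for `|z| < f^{2/3+ε}`,
`D_f(z) = f^{−1/3}(c₁ + c₂·z·f^{−2/3} + c₃·f^{1/3}) + O(f^{−1/3}(|z|f^{−2/3} + f^{1/3})²)`
with constants `cⱼ` depending only on `η` and `κ`, `c₁ ≠ 0`. -/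
theorem stmt17 (κ η ε : ℝ) (hκ : 0 < κ) (hη : 0 < η) (hε : 0 < ε) :
    ∃ c₁ c₂ c₃ : ℂ, c₁ ≠ 0 ∧ ∃ C > (0 : ℝ), ∃ f₀ > (0 : ℝ),
      ∀ f : ℝ, 0 < f → f < f₀ → ∀ z : ℂ,
        ‖z‖ < f ^ (2 / 3 + ε) →
        ‖Df κ η f z -
            ((f ^ (-(1 : ℝ) / 3) : ℝ) : ℂ) *
              (c₁ + c₂ * z * ((f ^ (-(2 : ℝ) / 3) : ℝ) : ℂ)
                + c₃ * ((f ^ ((1 : ℝ) / 3) : ℝ) : ℂ))‖ ≤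
          C * f ^ (-(1 : ℝ) / 3) *
            (‖z‖ * f ^ (-(2 : ℝ) / 3) + f ^ ((1 : ℝ) / 3)) ^ 2 := by
  obtain ⟨c₂, c₃, h⟩ := scaledDet_isBigO κ η wronskianUnit
  obtain ⟨C, hC, hbound⟩ := h.exists_pos
  have hev := hbound.bound
  rw [Filter.eventually_prod_iff] at hev
  obtain ⟨P, hP, Q, hQ, hPQ⟩ := hev
  obtain ⟨δ, hδ, hPδ⟩ := Metric.eventually_nhds_iff.1 hP
  have hpow (r : ℝ) (hr : 0 < r) : Tendsto (fun f : ℝ => f ^ r) (𝓝[>] 0) (𝓝[>] 0) := by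
    refine tendsto_nhdsWithin_iff.2 ⟨?_, ?_⟩
    · have h0 := (Real.continuousAt_rpow_const 0 r (Or.inr hr.le)).tendsto
      rw [Real.zero_rpow hr.ne'] at h0
      exact h0.mono_left nhdsWithin_le_nhds
    · filter_upwards [self_mem_nhdsWithin] with f hf
      exact Real.rpow_pos_of_pos hf _
  have hsmall : ∀ᶠ f : ℝ in 𝓝[>] 0, f ^ ε < δ ∧ Q (f ^ ((1 : ℝ) / 3)) :=
    (((hpow ε hε).mono_right nhdsWithin_le_nhds).eventually (eventually_lt_nhds hδ)).and
      ((hpow (1 / 3) (by norm_num)).eventually hQ)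
  obtain ⟨f₀, hf₀, hsub⟩ := mem_nhdsGT_iff_exists_Ioo_subset.1 hsmall
  refine ⟨_, c₂, c₃, leadingCoeff_ne_zero hκ hη, C, hC, f₀, hf₀, fun f hf hff z hz => ?_⟩
  obtain ⟨hfδ, hfQ⟩ := hsub ⟨hf, hff⟩
  have hs : 0 < f ^ (-(2 : ℝ) / 3) := Real.rpow_pos_of_pos hf _
  have hr : 0 < f ^ (-(1 : ℝ) / 3) := Real.rpow_pos_of_pos hf _
  have hnorm : ‖z * ((f ^ (-(2 : ℝ) / 3) : ℝ) : ℂ)‖ = ‖z‖ * f ^ (-(2 : ℝ) / 3) := by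
    rw [norm_mul, Complex.norm_real, Real.norm_of_nonneg hs.le]
  have hu : ‖z * ((f ^ (-(2 : ℝ) / 3) : ℝ) : ℂ)‖ < δ := by
    rw [hnorm]
    refine lt_trans ?_ hfδ
    calc ‖z‖ * f ^ (-(2 : ℝ) / 3) < f ^ (2 / 3 + ε) * f ^ (-(2 : ℝ) / 3) := by gcongr
      _ = f ^ ε := by
        rw [← Real.rpow_add hf]
        congr 1
        ring
  have key := hPQ (hPδ (by rwa [dist_zero_right])) hfQ
  rw [Real.norm_of_nonneg (sq_nonneg _), hnorm] at key
  rw [Df_eq_scaledDet κ η hf, ← mul_sub, norm_mul, Complex.norm_real, Real.norm_of_nonneg hr.le,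
    mul_assoc c₂]
  calc _ ≤ f ^ (-(1 : ℝ) / 3) *
        (C * (‖z‖ * f ^ (-(2 : ℝ) / 3) + f ^ ((1 : ℝ) / 3)) ^ 2) :=
        mul_le_mul_of_nonneg_left key hr.le
    _ = _ := by ring
end
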